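/- arXiv:1403.7609 — 2 statements merged into one kernel-verified Lean document; each statement's English description precedes it below -/
import Mathlib

section
/- (W-trick.) Let k ≥ 1 and let F(X) = ∏_{i=1}^k (a_i X + b_i) with a_i nonzero integers and b_i integers, such that F is admissible and Δ(F) ≠ 0. There exist a constant c(F) > 0 and a natural number N_0(F) such that the following holds for all N ≥ N_0(F). Set z = (log N)/3 and M = ∏_{p ≤ z, p prime} p. For every A ⊆ S_F(N, N^{1/(4k+1)}) with |A| = δ·|S_F(N, N^{1/(4k+1)})| and δ > 0, there exists b_0 ∈ {0, 1, …, M−1} such that gcd(F(b_0), M) = 1 and |{n ∈ A : n ≡ b_0 (mod M)}| ≥ c(F)·δ·(log log N)^k·(log N)^{−k}·N/M. -/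
/-- The primorial of a real number `z`: the product of all primes `p ≤ z`. -/
noncomputable def primor (z : ℝ) : ℕ :=
  ∏ p ∈ (Finset.range (⌊z⌋₊ + 1)).filter Nat.Prime, p

/-- `S_F(N, z)`: the set of natural numbers `n ≤ N` with `gcd(F(n), P(z)) = 1`. -/
noncomputable def SFset (F : ℤ → ℤ) (N : ℕ) (z : ℝ) : Finset ℕ :=
  (Finset.Icc 1 N).filter (fun n => Int.gcd (F n) (primor z) = 1)



noncomputable def wtA (p : ℕ) : ℝ := if p.Prime then Real.log p / p else 0
noncomputable def wtR (p : ℕ) : ℝ := if p.Prime then 1 / (p : ℝ) else 0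
noncomputable def wtE (n : ℕ) : ℝ := (∑ p ∈ Finset.Ioc 0 n, wtA p) - Real.log n

theorem log_fact_eq (n : ℕ) : Real.log (n.factorial : ℝ) =
    ∑ p ∈ Finset.Ioc 0 n with p.Prime, ((n.factorial.factorization p : ℕ) : ℝ) * Real.log p := by
  rw [Real.log_nat_eq_sum_factorization, Finsupp.sum]
  apply Finset.sum_subset
  · intro p hp
    simp only [Nat.support_factorization, Nat.mem_primeFactors] at hp
    simp only [Finset.mem_filter, Finset.mem_Ioc]
    exact ⟨⟨hp.1.pos, (hp.1.dvd_factorial).1 hp.2.1⟩, hp.1⟩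
  · intro p _ hp
    simp only [Finsupp.mem_support_iff, not_not] at hp
    simp [hp]

theorem div_le_factz {n p : ℕ} (hp : p.Prime) (hn : p ≤ n) :
    (n : ℝ) / p - 1 ≤ ((n.factorial.factorization p : ℕ) : ℝ) := by
  have h1 : n / p ≤ n.factorial.factorization p := by
    rw [Nat.factorization_factorial hp (Nat.lt_add_one (Nat.log p n))]
    have : n / p = n / p ^ 1 := by simp
    rw [this]
    apply Finset.single_le_sum (f := fun i => n / p ^ i) (fun _ _ => Nat.zero_le _)
    simp only [Finset.mem_Ico, le_refl, true_and]
    have : 0 < Nat.log p n := Nat.log_pos hp.one_lt hn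
    omega
  have h2 : (n : ℝ) / p < (n / p : ℕ) + 1 := by
    have hp0 : (0 : ℝ) < p := by exact_mod_cast hp.pos
    rw [div_lt_iff₀ hp0]
    have := Nat.lt_div_mul_add (a := n) hp.pos
    have h3 : n < (n / p + 1) * p := by linarith [Nat.add_mul (n/p) 1 p]
    exact_mod_cast h3
  have h3 : ((n / p : ℕ) : ℝ) ≤ (n.factorial.factorization p : ℕ) := by exact_mod_cast h1
  linarith

theorem factz_le_div {n p : ℕ} (hp : p.Prime) :
    ((n.factorial.factorization p : ℕ) : ℝ) ≤ n / ((p : ℝ) - 1) := by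
  have h := Nat.factorization_factorial_le_div_pred hp n
  have h1 : ((n.factorial.factorization p : ℕ) : ℝ) ≤ ((n / (p - 1) : ℕ) : ℝ) := by exact_mod_cast h
  refine h1.trans (Nat.cast_div_le.trans ?_)
  rw [Nat.cast_sub hp.one_lt.le]; simp

theorem sum_wtA (n : ℕ) : ∑ p ∈ Finset.Ioc 0 n, wtA p =
    ∑ p ∈ Finset.Ioc 0 n with p.Prime, Real.log p / p := by
  rw [Finset.sum_filter]; rfl

theorem wtE_upper (n : ℕ) (hn : 1 ≤ n) : wtE n ≤ Real.log 4 := by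
  have hn0 : (0 : ℝ) < n := by exact_mod_cast hn
  have h1 : n * (∑ p ∈ Finset.Ioc 0 n, wtA p) - Chebyshev.theta n ≤ Real.log (n.factorial : ℝ) := by
    rw [log_fact_eq, sum_wtA, Chebyshev.theta, Finset.mul_sum]
    simp only [Nat.floor_natCast]
    rw [← Finset.sum_sub_distrib]
    apply Finset.sum_le_sum
    intro p hp
    simp only [Finset.mem_filter, Finset.mem_Ioc] at hp
    have hl : 0 ≤ Real.log p := Real.log_natCast_nonneg p
    have := mul_le_mul_of_nonneg_right (div_le_factz hp.2 hp.1.2) hl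
    calc _ = ((n : ℝ) / p - 1) * Real.log p := by ring
      _ ≤ _ := this
  have h2 : Real.log (n.factorial : ℝ) ≤ n * Real.log n := by
    rw [← Real.log_pow]
    apply Real.log_le_log (by exact_mod_cast n.factorial_pos)
    exact_mod_cast Nat.factorial_le_pow n
  have h3 := Chebyshev.theta_le_log4_mul_x hn0.le
  unfold wtE
  have : n * ((∑ p ∈ Finset.Ioc 0 n, wtA p) - Real.log n) ≤ n * Real.log 4 := by linarith
  exact le_of_mul_le_mul_left this hn0

theorem wtE_lower : ∃ C : ℝ, 0 ≤ C ∧ ∀ n : ℕ, 1 ≤ n → -C ≤ wtE n := by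
  have hs : Summable (fun m : ℕ => 4 * (1 / (m : ℝ) ^ (3 / 2 : ℝ))) :=
    (Real.summable_one_div_nat_rpow.2 (by norm_num)).mul_left 4
  set T := ∑' m : ℕ, 4 * (1 / (m : ℝ) ^ (3 / 2 : ℝ)) with hT
  have hT0 : 0 ≤ T := tsum_nonneg (fun m => by positivity)
  refine ⟨T + 1, by linarith, fun n hn => ?_⟩
  have hn0 : (0 : ℝ) < n := by exact_mod_cast hn
  have h1 : Real.log (n.factorial : ℝ) ≤ n * (∑ p ∈ Finset.Ioc 0 n, wtA p) + n * T := by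
    have hb : ∑ p ∈ Finset.Ioc 0 n with p.Prime, 4 * (1 / (p : ℝ) ^ (3 / 2 : ℝ)) ≤ T :=
      hs.sum_le_tsum _ (fun m _ => by positivity)
    have : Real.log (n.factorial : ℝ) ≤ n * (∑ p ∈ Finset.Ioc 0 n, wtA p) +
        n * ∑ p ∈ Finset.Ioc 0 n with p.Prime, 4 * (1 / (p : ℝ) ^ (3 / 2 : ℝ)) := by
      rw [log_fact_eq, sum_wtA, Finset.mul_sum, Finset.mul_sum, ← Finset.sum_add_distrib]
      apply Finset.sum_le_sum
      intro p hp
      simp only [Finset.mem_filter, Finset.mem_Ioc] at hp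
      have hl : 0 ≤ Real.log p := Real.log_natCast_nonneg p
      have hp2 : (2 : ℝ) ≤ p := by exact_mod_cast hp.2.two_le
      have hp0 : (0 : ℝ) < p := by linarith
      refine (mul_le_mul_of_nonneg_right (factz_le_div hp.2) hl).trans ?_
      have h5 : Real.log p ≤ 2 * (p : ℝ) ^ (1 / 2 : ℝ) := by
        have := Real.log_le_rpow_div hp0.le (ε := 1 / 2) (by norm_num)
        linarith
      have h6 : (p : ℝ) ^ (3 / 2 : ℝ) * (p : ℝ) ^ (1 / 2 : ℝ) = p * p := by
        rw [← Real.rpow_add hp0]; norm_num; ring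
      have h7 : (0 : ℝ) < (p : ℝ) ^ (3 / 2 : ℝ) := by positivity
      have h8 : 1 / ((p : ℝ) - 1) = 1 / p + 1 / (p * (p - 1)) := by
        have : (p : ℝ) - 1 ≠ 0 := by linarith
        field_simp; ring
      have h9 : Real.log p * (1 / (p * ((p : ℝ) - 1))) ≤ 4 * (1 / (p : ℝ) ^ (3 / 2 : ℝ)) := by
        rw [mul_one_div, mul_one_div, div_le_div_iff₀ (by nlinarith) h7]
        calc Real.log p * (p : ℝ) ^ (3 / 2 : ℝ) ≤ 2 * (p : ℝ) ^ (1 / 2 : ℝ) * (p : ℝ) ^ (3 / 2 : ℝ) := by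
              gcongr
          _ = 2 * (p * p) := by rw [← h6]; ring
          _ ≤ 4 * (p * (p - 1)) := by nlinarith
      calc (n : ℝ) / (p - 1) * Real.log p = n * (1 / ((p : ℝ) - 1) * Real.log p) := by ring
        _ = n * (Real.log p / p) + n * (Real.log p * (1 / (p * ((p : ℝ) - 1)))) := by
            rw [h8]; ring
        _ ≤ _ := by gcongr
    exact this.trans (by gcongr)
  have h2 := Stirling.le_log_factorial_stirling (n := n) (by omega)
  have h3 : 0 ≤ Real.log n := Real.log_natCast_nonneg n
  have h4 : 0 ≤ Real.log (2 * Real.pi) := Real.log_nonneg (by linarith [Real.pi_gt_three])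
  unfold wtE
  have : n * (-(T + 1)) ≤ n * ((∑ p ∈ Finset.Ioc 0 n, wtA p) - Real.log n) := by nlinarith
  exact le_of_mul_le_mul_left this hn0

theorem wtE_bdd : ∃ C : ℝ, 0 ≤ C ∧ ∀ n : ℕ, 1 ≤ n → |wtE n| ≤ C := by
  obtain ⟨C, hC, h⟩ := wtE_lower
  refine ⟨C + Real.log 4, by positivity, fun n hn => ?_⟩
  have h4 : 0 ≤ Real.log 4 := Real.log_nonneg (by norm_num)
  rw [abs_le]
  constructor
  · linarith [h n hn]
  · linarith [wtE_upper n hn]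

theorem wtR_eq {n : ℕ} (hn : 2 ≤ n) : wtR n = wtA n / Real.log n := by
  unfold wtR wtA
  have : 0 < Real.log n := Real.log_pos (by exact_mod_cast hn)
  split_ifs
  · field_simp
  · simp

theorem wtA_eq (n : ℕ) : wtA (n + 1) =
    (Real.log ((n + 1 : ℕ) : ℝ) - Real.log n) + wtE (n + 1) - wtE n := by
  unfold wtE
  rw [Finset.sum_Ioc_succ_top (Nat.zero_le n)]; ring

/-- Mertens upper -/
theorem mert_up : ∃ C : ℝ, 0 ≤ C ∧ ∀ u n : ℕ, 2 ≤ u → u ≤ n →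
    ∑ p ∈ Finset.Ioc u n, wtR p ≤
      Real.log (Real.log n) - Real.log (Real.log u) + C / Real.log u := by
  obtain ⟨C, hC, hE⟩ := wtE_bdd
  refine ⟨2 * C, by linarith, fun u n hu hun => ?_⟩
  have key : ∑ p ∈ Finset.Ioc u n, wtR p ≤ Real.log (Real.log n) - Real.log (Real.log u)
      + wtE n / Real.log n - wtE u / Real.log u + C / Real.log u - C / Real.log n := by
    induction n, hun using Nat.le_induction with
    | base => simp
    | succ n hun ih =>
      rw [Finset.sum_Ioc_succ_top hun, wtR_eq (by omega), wtA_eq]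
      have hl : 0 < Real.log n := Real.log_pos (by exact_mod_cast (by omega : 1 < n))
      have hl2 : Real.log n ≤ Real.log ((n + 1 : ℕ) : ℝ) :=
        Real.log_le_log (by exact_mod_cast (by omega)) (by exact_mod_cast (by omega))
      set x := Real.log n
      set y := Real.log ((n + 1 : ℕ) : ℝ)
      have hy : 0 < y := by linarith
      have h1 : 1 - x / y ≤ Real.log y - Real.log x := by
        have := Real.log_le_sub_one_of_pos (div_pos hl hy)
        rw [Real.log_div hl.ne' hy.ne'] at this
        linarith
      have h2 : wtE n / x - wtE n / y ≤ C / x - C / y := by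
        have h3 := (abs_le.1 (hE n (by omega))).2
        have h4 : 1 / y ≤ 1 / x := one_div_le_one_div_of_le hl hl2
        have : wtE n * (1 / x - 1 / y) ≤ C * (1 / x - 1 / y) := by
          apply mul_le_mul_of_nonneg_right h3; linarith
        calc _ = wtE n * (1 / x - 1 / y) := by ring
          _ ≤ _ := this
          _ = _ := by ring
      have h5 : (y - x + wtE (n + 1) - wtE n) / y = 1 - x / y + wtE (n + 1) / y - wtE n / y := by
        field_simp
      rw [h5]
      linarith
  have hu0 : 0 < Real.log u := Real.log_pos (by exact_mod_cast hu)
  have hn0 : 0 < Real.log n := Real.log_pos (by exact_mod_cast (by omega : 1 < n))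
  have h1 : wtE n / Real.log n ≤ C / Real.log n := by
    gcongr; exact (abs_le.1 (hE n (by omega))).2
  have h2 : -C / Real.log u ≤ wtE u / Real.log u := by
    gcongr; exact (abs_le.1 (hE u (by omega))).1
  have h3 : 2 * C / Real.log u = C / Real.log u - (-C / Real.log u) := by ring
  rw [h3]; linarith

/-- Mertens lower -/
theorem mert_lo : ∃ C : ℝ, 0 ≤ C ∧ ∀ u n : ℕ, 2 ≤ u → u ≤ n →
      Real.log (Real.log n) - Real.log (Real.log u) - C / Real.log u ≤
    ∑ p ∈ Finset.Ioc u n, wtR p := by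
  obtain ⟨C, hC, hE⟩ := wtE_bdd
  refine ⟨2 * C + 1, by linarith, fun u n hu hun => ?_⟩
  have key : Real.log (Real.log n) - Real.log (Real.log u)
      + wtE n / Real.log n - wtE u / Real.log u - (C + 1) / Real.log u + (C + 1) / Real.log n
      ≤ ∑ p ∈ Finset.Ioc u n, wtR p := by
    induction n, hun using Nat.le_induction with
    | base => simp
    | succ n hun ih =>
      rw [Finset.sum_Ioc_succ_top hun, wtR_eq (by omega), wtA_eq]
      have hl : 0 < Real.log n := Real.log_pos (by exact_mod_cast (by omega : 1 < n))
      have hn0 : (0 : ℝ) < n := by exact_mod_cast (by omega)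
      have hn1 : (1 : ℝ) ≤ n := by exact_mod_cast (by omega)
      have hl2 : Real.log n ≤ Real.log ((n + 1 : ℕ) : ℝ) :=
        Real.log_le_log hn0 (by exact_mod_cast (by omega))
      have hd : Real.log ((n + 1 : ℕ) : ℝ) - Real.log n ≤ 1 := by
        rw [← Real.log_div (by positivity) hn0.ne']
        have := Real.log_le_sub_one_of_pos (x := ((n + 1 : ℕ) : ℝ) / n) (by positivity)
        have h6 : ((n + 1 : ℕ) : ℝ) / n ≤ 2 := by
          rw [div_le_iff₀ hn0]; push_cast; linarith
        linarith
      set x := Real.log n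
      set y := Real.log ((n + 1 : ℕ) : ℝ)
      have hy : 0 < y := by linarith
      have h1 : Real.log y - Real.log x ≤ y / x - 1 := by
        have := Real.log_le_sub_one_of_pos (div_pos hy hl)
        rw [Real.log_div hy.ne' hl.ne'] at this
        linarith
      have h4 : 1 / y ≤ 1 / x := one_div_le_one_div_of_le hl hl2
      have h7 : y / x - 1 ≤ 1 - x / y + (1 / x - 1 / y) := by
        have : (y - x) * (1 / x - 1 / y) ≤ 1 * (1 / x - 1 / y) := by
          apply mul_le_mul_of_nonneg_right hd; linarith
        have e : (y - x) * (1 / x - 1 / y) = (y / x - 1) - (1 - x / y) := by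
          field_simp
        linarith
      have h2 : C / y - C / x ≤ wtE n / x - wtE n / y := by
        have h3 := (abs_le.1 (hE n (by omega))).1
        have : -C * (1 / x - 1 / y) ≤ wtE n * (1 / x - 1 / y) := by
          apply mul_le_mul_of_nonneg_right h3; linarith
        calc _ = -C * (1 / x - 1 / y) := by ring
          _ ≤ _ := this
          _ = _ := by ring
      have h5 : (y - x + wtE (n + 1) - wtE n) / y = 1 - x / y + wtE (n + 1) / y - wtE n / y := by
        field_simp
      have h8 : (C + 1) / x = C / x + 1 / x := by ring
      have h9 : (C + 1) / y = C / y + 1 / y := by ring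
      rw [h5, h9]
      rw [h8] at ih
      linarith
  have hu0 : 0 < Real.log u := Real.log_pos (by exact_mod_cast hu)
  have hn0 : 0 < Real.log n := Real.log_pos (by exact_mod_cast (by omega : 1 < n))
  have h1 : -C / Real.log n ≤ wtE n / Real.log n := by
    gcongr; exact (abs_le.1 (hE n (by omega))).1
  have h2 : wtE u / Real.log u ≤ C / Real.log u := by
    gcongr; exact (abs_le.1 (hE u (by omega))).2
  have h3 : (2 * C + 1) / Real.log u = C / Real.log u + (C + 1) / Real.log u := by ring
  have h4 : 0 ≤ -C / Real.log n + (C + 1) / Real.log n := by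
    rw [← add_div]; simp; exact hn0.le
  rw [h3]; linarith


def sOk (y : ℕ → ℕ) (m p : ℕ) : Prop := Even m ∨ p ≤ y ((m + 1) / 2)

open Classical in
noncomputable def sPhi (y : ℕ → ℕ) (g : ℕ → ℝ) : ℕ → ℕ → ℝ
  | 0, _ => 1
  | n + 1, m => sPhi y g n m - if sOk y m (n + 1) then g (n + 1) * sPhi y g n (m + 1) else 0

open Classical in
noncomputable def sD (y : ℕ → ℕ) (P : ℕ → Prop) : ℕ → ℕ → Finset (Finset ℕ)
  | 0, _ => {∅}
  | n + 1, m => sD y P n m ∪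
      if P (n + 1) ∧ sOk y m (n + 1) then (sD y P n (m + 1)).image (insert (n + 1)) else ∅

noncomputable def sV (g : ℕ → ℝ) (n : ℕ) : ℝ := ∏ p ∈ Finset.Ioc 0 n, (1 - g p)

theorem sV_succ (g : ℕ → ℝ) (n : ℕ) : sV g (n + 1) = sV g n - g (n + 1) * sV g n := by
  unfold sV; rw [Finset.prod_Ioc_succ_top (Nat.zero_le n)]; ring

theorem sV_nonneg {g : ℕ → ℝ} (h1 : ∀ p, g p ≤ 1) (n : ℕ) : 0 ≤ sV g n :=
  Finset.prod_nonneg fun p _ => by linarith [h1 p]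

theorem sV_anti {g : ℕ → ℝ} (h0 : ∀ p, 0 ≤ g p) (h1 : ∀ p, g p ≤ 1) : Antitone (sV g) := by
  apply antitone_nat_of_succ_le
  intro n
  rw [sV_succ]
  nlinarith [mul_nonneg (h0 (n + 1)) (sV_nonneg h1 n)]

theorem sPhi_bound (y : ℕ → ℕ) {g : ℕ → ℝ} (h0 : ∀ p, 0 ≤ g p) (h1 : ∀ p, g p ≤ 1) (n : ℕ) :
    ∀ m, (Even m → sPhi y g n m ≤ sV g n) ∧ (¬ Even m → sV g n ≤ sPhi y g n m) := by
  induction n with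
  | zero => intro m; simp [sPhi, sV]
  | succ n ih =>
    intro m
    have hV := sV_nonneg h1 n
    have hg := h0 (n + 1)
    rw [sV_succ, sPhi]
    constructor
    · intro hm
      rw [if_pos (show sOk y m (n + 1) from Or.inl hm)]
      have a := (ih m).1 hm
      have b := (ih (m + 1)).2 (by simpa [Nat.even_add_one] using hm)
      nlinarith [mul_le_mul_of_nonneg_left b hg]
    · intro hm
      have a := (ih m).2 hm
      have b := (ih (m + 1)).1 (by simpa [Nat.even_add_one] using hm)
      split_ifs
      · nlinarith [mul_le_mul_of_nonneg_left b hg]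
      · nlinarith [mul_nonneg hg hV]

theorem sD_subset (y : ℕ → ℕ) (P : ℕ → Prop) (n : ℕ) : ∀ m, ∀ S ∈ sD y P n m,
    ∀ p ∈ S, P p ∧ 0 < p ∧ p ≤ n := by
  induction n with
  | zero => intro m S hS; simp [sD] at hS; simp [hS]
  | succ n ih =>
    intro m S hS p hp
    rw [sD, Finset.mem_union] at hS
    rcases hS with hS | hS
    · have := ih m S hS p hp; exact ⟨this.1, this.2.1, by omega⟩
    · split_ifs at hS with h
      · rw [Finset.mem_image] at hS
        obtain ⟨S', hS', rfl⟩ := hS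
        rw [Finset.mem_insert] at hp
        rcases hp with rfl | hp
        · exact ⟨h.1, by omega, le_refl _⟩
        · have := ih _ S' hS' p hp; exact ⟨this.1, this.2.1, by omega⟩
      · simp at hS

theorem sPhi_eq (y : ℕ → ℕ) (P : ℕ → Prop) {g : ℕ → ℝ} (hg : ∀ p, ¬ P p → g p = 0) (n : ℕ) :
    ∀ m, sPhi y g n m = ∑ S ∈ sD y P n m, (-1) ^ S.card * ∏ p ∈ S, g p := by
  induction n with
  | zero => intro m; simp [sPhi, sD]
  | succ n ih =>
    intro m
    have hni : ∀ m, ∀ S ∈ sD y P n m, n + 1 ∉ S := fun m S hS h => by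
      have := sD_subset y P n m S hS _ h; omega
    rw [sPhi, sD, Finset.sum_union]
    · rw [ih m]
      by_cases hP : P (n + 1)
      · by_cases ho : sOk y m (n + 1)
        · rw [if_pos ho, if_pos ⟨hP, ho⟩, Finset.sum_image]
          · rw [ih (m + 1), Finset.mul_sum, sub_eq_add_neg, ← Finset.sum_neg_distrib]
            congr 1
            apply Finset.sum_congr rfl
            intro S hS
            rw [Finset.card_insert_of_notMem (hni _ S hS), Finset.prod_insert (hni _ S hS)]
            ring
          · intro S hS S' hS' h
            have := congrArg (fun s => s.erase (n + 1)) h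
            simpa [Finset.erase_insert (hni _ S hS), Finset.erase_insert (hni _ S' hS')] using this
        · rw [if_neg ho, if_neg (fun h => ho h.2)]; simp
      · rw [if_neg (fun h : P (n + 1) ∧ sOk y m (n + 1) => hP h.1), hg _ hP]; simp
    · rw [Finset.disjoint_left]
      intro S hS hS'
      split_ifs at hS'
      · rw [Finset.mem_image] at hS'
        obtain ⟨S', -, rfl⟩ := hS'
        exact hni _ _ hS (Finset.mem_insert_self _ _)
      · simp at hS'

theorem sD_sum_le (y : ℕ → ℕ) (P : ℕ → Prop) {h : ℕ → ℝ} (h0 : ∀ p, 0 ≤ h p) (n m : ℕ) :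
    ∑ S ∈ sD y P n m, ∏ p ∈ S, h p ≤ ∏ p ∈ Finset.Ioc 0 n, (1 + h p) := by
  rw [Finset.prod_one_add]
  apply Finset.sum_le_sum_of_subset_of_nonneg
  · intro S hS
    rw [Finset.mem_powerset]
    intro p hp
    have := sD_subset y P n m S hS p hp
    simp; omega
  · intro S _ _; exact Finset.prod_nonneg fun p _ => h0 p

theorem sD_level (y : ℕ → ℕ) (P : ℕ → Prop) (l T : ℕ → ℝ)
    (hl : ∀ i p : ℕ, 0 < p → p ≤ y i → Real.log p ≤ l i)
    (hT0 : ∀ m, 0 ≤ T m) (hT : ∀ m, l ((m + 1) / 2) + T (m + 1) ≤ T m) (n : ℕ) :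
    ∀ m, (Even m → n ≤ y (m / 2)) → ∀ S ∈ sD y P n m, ∑ p ∈ S, Real.log p ≤ T m := by
  induction n with
  | zero => intro m _ S hS; simp [sD] at hS; simp [hS, hT0]
  | succ n ih =>
    intro m hm S hS
    rw [sD, Finset.mem_union] at hS
    rcases hS with hS | hS
    · exact ih m (fun h => by have := hm h; omega) S hS
    · split_ifs at hS with h
      · rw [Finset.mem_image] at hS
        obtain ⟨S', hS', rfl⟩ := hS
        have hle : n + 1 ≤ y ((m + 1) / 2) := by
          by_cases he : Even m
          · have := hm he
            have e : (m + 1) / 2 = m / 2 := by obtain ⟨r, rfl⟩ := he; omega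
            rwa [e]
          · rcases h.2 with h | h
            · exact absurd h he
            · exact h
        have hn : n + 1 ∉ S' := fun h => by
          have := sD_subset y P n _ S' hS' _ h; omega
        rw [Finset.sum_insert hn]
        have a := ih (m + 1) (fun _ => by omega) S' hS'
        have b := hl _ (n + 1) (by omega) hle
        linarith [hT m]
      · simp at hS

theorem pow_add_fact {G g : ℝ} (hG : 0 ≤ G) (hg : 0 ≤ g) (j : ℕ) :
    G ^ (j + 1) / (j + 1).factorial + g * (G ^ j / j.factorial) ≤
      (G + g) ^ (j + 1) / (j + 1).factorial := by
  have h : ∀ j : ℕ, G ^ (j + 1) + (j + 1) * g * G ^ j ≤ (G + g) ^ (j + 1) := by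
    intro j
    induction j with
    | zero => simp
    | succ j ih =>
      have := mul_le_mul_of_nonneg_right ih (add_nonneg hG hg)
      have h2 : 0 ≤ (j + 1) * g * g * G ^ j := by positivity
      push_cast
      calc _ ≤ (G ^ (j + 1) + (j + 1) * g * G ^ j) * (G + g) := by
            ring_nf; ring_nf at h2; linarith
        _ ≤ _ := this
        _ = _ := by ring
  have e : g * (G ^ j / j.factorial) = ((j + 1) * g * G ^ j) / (j + 1).factorial := by
    rw [Nat.factorial_succ]; push_cast
    have : (j.factorial : ℝ) ≠ 0 := by positivity
    field_simp
  rw [e, ← add_div]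
  gcongr
  exact h j

noncomputable def sG (y : ℕ → ℕ) (g : ℕ → ℝ) (i n : ℕ) : ℝ := ∑ p ∈ Finset.Ioc (y i) n, g p

noncomputable def sTm (y : ℕ → ℕ) (g : ℕ → ℝ) (n m i : ℕ) : ℝ :=
  if m < 2 * i then sG y g i n ^ (2 * i - m) / (2 * i - m).factorial * sV g (y i) else 0

theorem sTm_step (y : ℕ → ℕ) {g : ℕ → ℝ} (h0 : ∀ p, 0 ≤ g p) (h1 : ∀ p, g p ≤ 1) (n m i : ℕ) :
    sTm y g n m i + g (n + 1) * sTm y g n (m + 1) i +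
      (if i = (m + 1) / 2 ∧ ¬ Even m ∧ y i < n + 1 then g (n + 1) * sV g n else 0)
      ≤ sTm y g (n + 1) m i := by
  have hV := sV_nonneg h1 (y i)
  have hg := h0 (n + 1)
  have hG : 0 ≤ sG y g i n := Finset.sum_nonneg fun p _ => h0 p
  unfold sTm
  by_cases hm : m < 2 * i
  · rw [if_pos hm, if_pos hm]
    obtain ⟨j, hj⟩ : ∃ j, 2 * i - m = j + 1 := ⟨2 * i - m - 1, by omega⟩
    by_cases hy : y i < n + 1
    · have e : sG y g i (n + 1) = sG y g i n + g (n + 1) := by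
        unfold sG; rw [Finset.sum_Ioc_succ_top (by omega)]
      have key := pow_add_fact hG hg j
      have key2 := mul_le_mul_of_nonneg_right key hV
      rw [e, hj]
      by_cases hm2 : m + 1 < 2 * i
      · rw [if_pos hm2, if_neg (by
          rintro ⟨h, h', _⟩
          rw [Nat.not_even_iff] at h'; omega)]
        have : 2 * i - (m + 1) = j := by omega
        rw [this]
        linarith
      · rw [if_neg hm2]
        have hj0 : j = 0 := by omega
        subst hj0
        have hVV : sV g n ≤ sV g (y i) := sV_anti h0 h1 (by omega)
        have := mul_le_mul_of_nonneg_left hVV hg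
        split_ifs
        · simp at key2 ⊢; linarith
        · simp at key2 ⊢; nlinarith [mul_nonneg hg hV]
    · have e : sG y g i (n + 1) = 0 := by
        unfold sG; rw [Finset.Ioc_eq_empty (by omega)]; simp
      have e' : sG y g i n = 0 := by
        unfold sG; rw [Finset.Ioc_eq_empty (by omega)]; simp
      rw [if_neg (fun h : _ ∧ _ ∧ _ => hy h.2.2), e, e']
      by_cases hm2 : m + 1 < 2 * i
      · rw [if_pos hm2]
        obtain ⟨j', hj'⟩ : ∃ j, 2 * i - (m + 1) = j + 1 := ⟨2 * i - (m + 1) - 1, by omega⟩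
        rw [hj', hj]; simp
      · rw [if_neg hm2]; simp
  · rw [if_neg hm, if_neg hm, if_neg (by omega), if_neg (by
      rintro ⟨h, h', _⟩
      rw [Nat.not_even_iff] at h'; omega)]
    simp

theorem sPhi_err (y : ℕ → ℕ) {g : ℕ → ℝ} (h0 : ∀ p, 0 ≤ g p) (h1 : ∀ p, g p ≤ 1) (I n : ℕ) :
    ∀ m, m + n ≤ 2 * I →
      (Even m → sV g n - sPhi y g n m ≤ ∑ i ∈ Finset.Icc 1 I, sTm y g n m i) ∧
      (¬ Even m → sPhi y g n m - sV g n ≤ ∑ i ∈ Finset.Icc 1 I, sTm y g n m i) := by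
  induction n with
  | zero =>
    intro m _
    have : 0 ≤ ∑ i ∈ Finset.Icc 1 I, sTm y g 0 m i := by
      apply Finset.sum_nonneg
      intro i _
      unfold sTm
      have hV := sV_nonneg h1 (y i)
      have hG : 0 ≤ sG y g i 0 := Finset.sum_nonneg fun p _ => h0 p
      split_ifs
      · positivity
      · exact le_refl _
    simp [sPhi, sV, this]
  | succ n ih =>
    intro m hmn
    have hV := sV_nonneg h1 n
    have hg := h0 (n + 1)
    have hs := Finset.sum_le_sum (fun i (_ : i ∈ Finset.Icc 1 I) => sTm_step y h0 h1 n m i)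
    rw [Finset.sum_add_distrib, Finset.sum_add_distrib, ← Finset.mul_sum] at hs
    have hnn : ∀ i ∈ Finset.Icc 1 I,
        0 ≤ (if i = (m + 1) / 2 ∧ ¬ Even m ∧ y i < n + 1 then g (n + 1) * sV g n else 0) := by
      intro i _; split_ifs
      · positivity
      · exact le_refl _
    have ih1 := ih m (by omega)
    have ih2 := ih (m + 1) (by omega)
    rw [sV_succ, sPhi]
    constructor
    · intro hm
      rw [if_pos (show sOk y m (n + 1) from Or.inl hm)]
      have a := ih1.1 hm
      have b := mul_le_mul_of_nonneg_left (ih2.2 (by simpa [Nat.even_add_one] using hm)) hg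
      have c := Finset.sum_nonneg hnn
      linarith
    · intro hm
      have a := ih1.2 hm
      have b := mul_le_mul_of_nonneg_left (ih2.1 (by simpa [Nat.even_add_one] using hm)) hg
      by_cases ho : sOk y m (n + 1)
      · rw [if_pos ho]
        have c := Finset.sum_nonneg hnn
        linarith
      · rw [if_neg ho]
        have hy : y ((m + 1) / 2) < n + 1 := by
          by_contra h; exact ho (Or.inr (by omega))
        have hodd : m % 2 = 1 := Nat.not_even_iff.1 hm
        have c := Finset.single_le_sum hnn (a := (m + 1) / 2)
          (by rw [Finset.mem_Icc]; constructor <;> omega)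
        rw [if_pos ⟨rfl, hm, hy⟩] at c
        have d := (sPhi_bound y h0 h1 n (m + 1)).1 (by simpa [Nat.even_add_one] using hm)
        have d' := mul_nonneg hg (sub_nonneg.2 d)
        linarith


noncomputable def nA (n : ℕ) : ℝ := (n : ℝ) ^ n / n.factorial

theorem nA_succ {n : ℕ} (hn : 1 ≤ n) : nA (n + 1) ≤ Real.exp 1 * nA n := by
  have hn0 : (0 : ℝ) < n := by exact_mod_cast hn
  have h : ((n : ℝ) + 1) ^ n ≤ Real.exp 1 * (n : ℝ) ^ n := by
    have h1 : ((n : ℝ) + 1) / n ≤ Real.exp (1 / n) := by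
      have := Real.add_one_le_exp (1 / (n : ℝ))
      have e : ((n : ℝ) + 1) / n = 1 / n + 1 := by field_simp; ring
      rw [e]; exact this
    have h2 := pow_le_pow_left₀ (by positivity) h1 n
    rw [← Real.exp_nat_mul, mul_one_div_cancel hn0.ne', div_pow, div_le_iff₀ (by positivity)] at h2
    exact h2
  unfold nA
  rw [Nat.factorial_succ, pow_succ]
  push_cast
  have hf : (0 : ℝ) < n.factorial := by positivity
  have e : ((n : ℝ) + 1) ^ n * (n + 1) / ((n + 1) * n.factorial) = ((n : ℝ) + 1) ^ n / n.factorial := by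
    field_simp
  rw [e, ← mul_div_assoc]
  gcongr

noncomputable def nT (i : ℕ) : ℝ := ((i : ℝ) / 2) ^ (2 * i) / (2 * i).factorial * Real.exp (i / 2)

theorem nT_eq (i : ℕ) : nT i = nA (2 * i) / 16 ^ i * Real.exp (i / 2) := by
  unfold nT nA
  have : ((i : ℝ) / 2) = ((2 * i : ℕ) : ℝ) / 4 := by push_cast; ring
  rw [this, div_pow, pow_mul (4 : ℝ)]
  norm_num
  rw [div_right_comm]

theorem exp_half_lt : Real.exp (1 / 2) < 1.6488 := by
  have h : Real.exp (1 / 2) * Real.exp (1 / 2) = Real.exp 1 := by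
    rw [← Real.exp_add]; norm_num
  have := Real.exp_one_lt_d9
  by_contra hc
  push Not at hc
  nlinarith

theorem nT_succ {i : ℕ} (hi : 1 ≤ i) : nT (i + 1) ≤ 0.7616 * nT i := by
  rw [nT_eq, nT_eq]
  have hA : 0 ≤ nA (2 * i) := by unfold nA; positivity
  have h1 : nA (2 * (i + 1)) ≤ Real.exp 1 * (Real.exp 1 * nA (2 * i)) := by
    have a := nA_succ (n := 2 * i) (by omega)
    have b := nA_succ (n := 2 * i + 1) (by omega)
    refine b.trans ?_
    gcongr
  have h2 : Real.exp (((i + 1 : ℕ) : ℝ) / 2) = Real.exp (i / 2) * Real.exp (1 / 2) := by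
    rw [← Real.exp_add]; push_cast; ring_nf
  rw [h2]
  have h3 : Real.exp 1 * Real.exp 1 * Real.exp (1 / 2) / 16 ≤ 0.7616 := by
    have a := Real.exp_one_lt_d9
    have b := exp_half_lt
    have c : Real.exp 1 * Real.exp 1 ≤ 7.38906 := by nlinarith [Real.exp_pos 1]
    have d : Real.exp 1 * Real.exp 1 * Real.exp (1 / 2) ≤ 7.38906 * 1.6488 := by gcongr
    linarith
  calc _ ≤ Real.exp 1 * (Real.exp 1 * nA (2 * i)) / 16 ^ (i + 1) * (Real.exp (i / 2) * Real.exp (1 / 2)) := by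
        gcongr
    _ = (Real.exp 1 * Real.exp 1 * Real.exp (1 / 2) / 16) * (nA (2 * i) / 16 ^ i * Real.exp (i / 2)) := by
        rw [pow_succ]; ring
    _ ≤ _ := by gcongr

theorem nT_le (i : ℕ) : nT (i + 1) ≤ 0.2062 * 0.7616 ^ i := by
  induction i with
  | zero =>
    unfold nT
    have := exp_half_lt
    norm_num at this ⊢
    linarith
  | succ i ih =>
    refine (nT_succ (by omega)).trans ?_
    rw [pow_succ]; linarith

theorem nT_sum (I : ℕ) : ∑ i ∈ Finset.Icc 1 I, nT i ≤ 9 / 10 := by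
  have : ∑ i ∈ Finset.Icc 1 I, nT i ≤ 0.87 * (1 - 0.7616 ^ I) := by
    induction I with
    | zero => simp
    | succ I ih =>
      rw [Finset.sum_Icc_succ_top (by omega)]
      have := nT_le I
      have h : (0 : ℝ) < 0.7616 ^ I := by positivity
      rw [pow_succ]
      linarith
  have h : (0 : ℝ) < 0.7616 ^ I := by positivity
  linarith

theorem sPhi_main (y : ℕ → ℕ) {g : ℕ → ℝ} (h0 : ∀ p, 0 ≤ g p) (h1 : ∀ p, g p < 1) (n : ℕ)
    (hy : ∀ i, 1 ≤ i → y i ≤ n)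
    (hs : ∀ i, 1 ≤ i → ∑ p ∈ Finset.Ioc (y i) n, (-Real.log (1 - g p)) ≤ (i : ℝ) / 2) :
    sV g n / 10 ≤ sPhi y g n 0 := by
  have h1' : ∀ p, g p ≤ 1 := fun p => (h1 p).le
  have h := (sPhi_err y h0 h1' n n 0 (by omega)).1 (by simp)
  have hV := sV_nonneg h1' n
  have h2 : ∑ i ∈ Finset.Icc 1 n, sTm y g n 0 i ≤ ∑ i ∈ Finset.Icc 1 n, nT i * sV g n := by
    apply Finset.sum_le_sum
    intro i hi
    rw [Finset.mem_Icc] at hi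
    unfold sTm nT
    rw [if_pos (by omega)]
    have hG0 : 0 ≤ sG y g i n := Finset.sum_nonneg fun p _ => h0 p
    have hG : sG y g i n ≤ (i : ℝ) / 2 := by
      refine le_trans ?_ (hs i hi.1)
      apply Finset.sum_le_sum
      intro p _
      have := Real.log_le_sub_one_of_pos (sub_pos.2 (h1 p))
      linarith
    have hVi : sV g (y i) ≤ Real.exp (i / 2) * sV g n := by
      have e : sV g n = sV g (y i) * ∏ p ∈ Finset.Ioc (y i) n, (1 - g p) := by
        unfold sV
        rw [Finset.prod_Ioc_consecutive _ (Nat.zero_le _) (hy i hi.1)]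
      have e2 : ∏ p ∈ Finset.Ioc (y i) n, (1 - g p) =
          Real.exp (-∑ p ∈ Finset.Ioc (y i) n, (-Real.log (1 - g p))) := by
        rw [Finset.sum_neg_distrib, neg_neg, Real.exp_sum]
        apply Finset.prod_congr rfl
        intro p _
        rw [Real.exp_log (sub_pos.2 (h1 p))]
      have e3 : Real.exp (-((i : ℝ) / 2)) ≤ ∏ p ∈ Finset.Ioc (y i) n, (1 - g p) := by
        rw [e2]
        apply Real.exp_le_exp.2
        linarith [hs i hi.1]
      have hVy := sV_nonneg h1' (y i)
      calc sV g (y i) = Real.exp (i / 2) * (sV g (y i) * Real.exp (-((i : ℝ) / 2))) := by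
            rw [mul_comm (sV g (y i)), ← mul_assoc, ← Real.exp_add]; simp
        _ ≤ Real.exp (i / 2) * sV g n := by rw [e]; gcongr
    simp only [Nat.sub_zero]
    rw [mul_assoc]
    have hVy := sV_nonneg h1' (y i)
    gcongr
  rw [← Finset.sum_mul] at h2
  have h3 := mul_le_mul_of_nonneg_right (nT_sum n) hV
  linarith


open Classical in
noncomputable def rho (A : ℕ → Prop) (d : ℕ) : ℕ := ((Finset.range d).filter A).card

theorem rho_mul {a b : ℕ} (hab : Nat.Coprime a b) (ha : 0 < a) (hb : 0 < b) {A B : ℕ → Prop}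
    (hA : ∀ m, A m ↔ A (m % a)) (hB : ∀ m, B m ↔ B (m % b)) :
    rho (fun m => A m ∧ B m) (a * b) = rho A a * rho B b := by
  classical
  unfold rho
  rw [← Finset.card_product]
  apply Finset.card_nbij' (fun m => (m % a, m % b))
    (fun x => (Nat.chineseRemainder hab x.1 x.2 : ℕ))
  · intro m hm
    simp only [Finset.coe_filter, Finset.mem_range, Set.mem_ofPred_eq] at hm
    simp only [Finset.coe_product, Finset.coe_filter, Finset.mem_range, Set.mem_prod, Set.mem_ofPred_eq]
    exact ⟨⟨Nat.mod_lt _ ha, (hA m).1 hm.2.1⟩, ⟨Nat.mod_lt _ hb, (hB m).1 hm.2.2⟩⟩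
  · intro x hx
    simp only [Finset.coe_product, Finset.coe_filter, Finset.mem_range, Set.mem_prod, Set.mem_ofPred_eq] at hx
    simp only [Finset.coe_filter, Finset.mem_range, Set.mem_ofPred_eq]
    have h := (Nat.chineseRemainder hab x.1 x.2).2
    refine ⟨Nat.chineseRemainder_lt_mul hab _ _ ha.ne' hb.ne', ?_, ?_⟩
    · rw [hA, h.1, ← hA]; exact hx.1.2
    · rw [hB, h.2, ← hB]; exact hx.2.2
  · intro m hm
    simp only [Finset.coe_filter, Finset.mem_range, Set.mem_ofPred_eq] at hm
    have := Nat.chineseRemainder_modEq_unique hab (a := m % a) (b := m % b) (z := m)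
      (Nat.mod_modEq m a).symm (Nat.mod_modEq m b).symm
    have h2 := Nat.chineseRemainder_lt_mul hab (m % a) (m % b) ha.ne' hb.ne'
    exact (Nat.ModEq.eq_of_lt_of_lt this hm.1 h2).symm
  · intro x hx
    simp only [Finset.coe_product, Finset.coe_filter, Finset.mem_range, Set.mem_prod, Set.mem_ofPred_eq] at hx
    have h := (Nat.chineseRemainder hab x.1 x.2).2
    ext
    · exact Eq.trans h.1 (Nat.mod_eq_of_lt hx.1.1)
    · exact Eq.trans h.2 (Nat.mod_eq_of_lt hx.2.1)

theorem per_of_dvd {A : ℕ → Prop} {d e : ℕ} (hde : d ∣ e) (hA : ∀ m, A m ↔ A (m % d)) :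
    ∀ m, A m ↔ A (m % e) := by
  intro m
  rw [hA m, hA (m % e), Nat.mod_mod_of_dvd _ hde]

theorem per_all {A : ℕ → ℕ → Prop} (hA : ∀ p m, A p m ↔ A p (m % p)) (S : Finset ℕ) :
    ∀ m, (∀ p ∈ S, A p m) ↔ (∀ p ∈ S, A p (m % ∏ p ∈ S, p)) := by
  intro m
  apply forall₂_congr
  intro p hp
  exact per_of_dvd (Finset.dvd_prod_of_mem _ hp) (hA p) m

theorem rho_prod {A : ℕ → ℕ → Prop} (hA : ∀ p m, A p m ↔ A p (m % p)) (S : Finset ℕ)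
    (hS : ∀ p ∈ S, p.Prime) :
    rho (fun m => ∀ p ∈ S, A p m) (∏ p ∈ S, p) = ∏ p ∈ S, rho (A p) p := by
  classical
  induction S using Finset.induction_on with
  | empty => simp [rho]
  | insert q S hq ih =>
    rw [Finset.prod_insert hq, Finset.prod_insert hq, ← ih (fun p hp => hS p (Finset.mem_insert_of_mem hp))]
    rw [← rho_mul _ (hS q (Finset.mem_insert_self _ _)).pos
      (Finset.prod_pos fun p hp => (hS p (Finset.mem_insert_of_mem hp)).pos) (hA q) (per_all hA S)]
    · congr 1
      funext m
      simp
    · apply Nat.Coprime.prod_right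
      intro p hp
      rw [Nat.coprime_primes (hS q (Finset.mem_insert_self _ _)) (hS p (Finset.mem_insert_of_mem hp))]
      rintro rfl; exact hq hp

theorem rho_mono (A : ℕ → Prop) {d e : ℕ} (h : d ≤ e) : rho A d ≤ rho A e := by
  classical
  unfold rho
  apply Finset.card_le_card
  apply Finset.filter_subset_filter
  simpa using h

theorem rho_eq_count (A : ℕ → Prop) [DecidablePred A] (d : ℕ) : rho A d = Nat.count A d := by
  rw [Nat.count_eq_card_filter_range, rho]
  congr!

theorem rho_period {A : ℕ → Prop} {d : ℕ} (hA : ∀ m, A m ↔ A (m % d)) (t r : ℕ) :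
    rho A (d * t + r) = t * rho A d + rho A r := by
  classical
  simp only [rho_eq_count]
  induction t with
  | zero => simp
  | succ t ih =>
    have e : d * (t + 1) + r = d + (d * t + r) := by ring
    rw [e, Nat.count_add]
    have : (fun k => A (d + k)) = A := by
      funext k; apply propext; rw [hA (d + k), hA k]; simp
    simp only [this]
    rw [ih]; ring

theorem rho_approx {A : ℕ → Prop} {d : ℕ} (hd : 0 < d) (hA : ∀ m, A m ↔ A (m % d)) (X : ℕ) :
    |(rho A X : ℝ) - X * (rho A d / d)| ≤ rho A d := by
  have h := rho_period hA (X / d) (X % d)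
  rw [Nat.div_add_mod] at h
  have hr := rho_mono A (Nat.mod_lt X hd).le
  have hd0 : (0 : ℝ) < d := by exact_mod_cast hd
  have hX : (X : ℝ) = d * (X / d : ℕ) + (X % d : ℕ) := by exact_mod_cast (Nat.div_add_mod X d).symm
  have hm : ((X % d : ℕ) : ℝ) ≤ d := by exact_mod_cast (Nat.mod_lt X hd).le
  have hr' : (rho A (X % d) : ℝ) ≤ rho A d := by exact_mod_cast hr
  have h' : (rho A X : ℝ) = (X / d : ℕ) * rho A d + rho A (X % d) := by exact_mod_cast h
  have e : (X : ℝ) * (rho A d / d) = (X / d : ℕ) * rho A d + ((X % d : ℕ) / d) * rho A d := by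
    rw [hX]; field_simp
  rw [h', e]
  have h5 : ((X % d : ℕ) : ℝ) / d ≤ 1 := by rw [div_le_one hd0]; exact hm
  have h6 : 0 ≤ ((X % d : ℕ) : ℝ) / d := by positivity
  have h7 : (0 : ℝ) ≤ rho A d := by positivity
  have h8 : (0 : ℝ) ≤ rho A (X % d) := by positivity
  rw [abs_le]
  constructor
  · nlinarith
  · nlinarith

open Classical in
theorem sieve_lower (y : ℕ → ℕ) (P : ℕ → Prop) (hP : ∀ p, P p → p.Prime) (A : ℕ → ℕ → Prop)
    (hA : ∀ p m, A p m ↔ A p (m % p)) (n X : ℕ) (Y : ℝ)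
    (hY : ∀ S ∈ sD y P n 0, ∏ p ∈ S, (p : ℝ) ≤ Y) (g : ℕ → ℝ)
    (hg : ∀ p, g p = if P p then (rho (A p) p : ℝ) / p else 0) :
    X * sPhi y g n 0 - Y * ∏ p ∈ Finset.Ioc 0 n, (1 + g p) ≤
      (((Finset.range X).filter (fun m => ∀ p ∈ Finset.Ioc 0 n, P p → ¬ A p m)).card : ℝ) := by
  have hg0 : ∀ p, 0 ≤ g p := fun p => by rw [hg]; split_ifs <;> positivity
  set G : ℕ → ℕ → ℝ := fun m p => if P p ∧ A p m then 1 else 0 with hG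
  have hG0 : ∀ m p, 0 ≤ G m p := fun m p => by simp only [hG]; split_ifs <;> norm_num
  have hG1 : ∀ m p, G m p ≤ 1 := fun m p => by simp only [hG]; split_ifs <;> norm_num
  have e1 : (((Finset.range X).filter (fun m => ∀ p ∈ Finset.Ioc 0 n, P p → ¬ A p m)).card : ℝ)
      = ∑ m ∈ Finset.range X, sV (G m) n := by
    rw [Finset.card_eq_sum_ones, Finset.sum_filter]
    push_cast
    apply Finset.sum_congr rfl
    intro m _
    unfold sV
    split_ifs with h
    · symm
      apply Finset.prod_eq_one
      intro p hp
      simp only [hG]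
      rw [if_neg (fun h' => h p hp h'.1 h'.2)]; simp
    · push Not at h
      obtain ⟨p, hp, h1, h2⟩ := h
      symm
      apply Finset.prod_eq_zero hp
      simp only [hG]
      rw [if_pos ⟨h1, h2⟩]; simp
  have e2 : ∑ m ∈ Finset.range X, sPhi y (G m) n 0 ≤ ∑ m ∈ Finset.range X, sV (G m) n :=
    Finset.sum_le_sum fun m _ => (sPhi_bound y (hG0 m) (hG1 m) n 0).1 (by simp)
  have e3 : ∑ m ∈ Finset.range X, sPhi y (G m) n 0 =
      ∑ S ∈ sD y P n 0, (-1) ^ S.card * (rho (fun m => ∀ p ∈ S, A p m) X : ℝ) := by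
    have : ∀ m, sPhi y (G m) n 0 = ∑ S ∈ sD y P n 0, (-1) ^ S.card * ∏ p ∈ S, G m p := fun m =>
      sPhi_eq y P (fun p hp => by simp only [hG]; rw [if_neg (fun h => hp h.1)]) n 0
    simp only [this]
    rw [Finset.sum_comm]
    apply Finset.sum_congr rfl
    intro S hS
    rw [← Finset.mul_sum]
    congr 1
    unfold rho
    rw [Finset.card_eq_sum_ones, Finset.sum_filter]
    push_cast
    apply Finset.sum_congr rfl
    intro m _
    split_ifs with h
    · apply Finset.prod_eq_one
      intro p hp
      simp only [hG]
      rw [if_pos ⟨(sD_subset y P n 0 S hS p hp).1, h p hp⟩]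
    · push Not at h
      obtain ⟨p, hp, h1⟩ := h
      apply Finset.prod_eq_zero hp
      simp only [hG]
      rw [if_neg (fun h' => h1 h'.2)]
  have e4 : sPhi y g n 0 = ∑ S ∈ sD y P n 0, (-1) ^ S.card * ∏ p ∈ S, g p :=
    sPhi_eq y P (fun p hp => by rw [hg, if_neg hp]) n 0
  have e5 : ∑ S ∈ sD y P n 0, ∏ p ∈ S, g p ≤ ∏ p ∈ Finset.Ioc 0 n, (1 + g p) :=
    sD_sum_le y P hg0 n 0
  have hY0 : 0 ≤ Y ∨ sD y P n 0 = ∅ := by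
    rcases Finset.eq_empty_or_nonempty (sD y P n 0) with h | ⟨S, hS⟩
    · exact Or.inr h
    · left; exact le_trans (Finset.prod_nonneg fun p _ => by positivity) (hY S hS)
  have hY1 : 0 ≤ Y := by
    rcases hY0 with h | h
    · exact h
    · exfalso
      have : ∀ n m, ∅ ∈ sD y P n m := by
        intro n
        induction n with
        | zero => intro m; simp [sD]
        | succ n ih => intro m; rw [sD, Finset.mem_union]; exact Or.inl (ih m)
      have := this n 0
      rw [h] at this; simp at this
  have e6 : X * sPhi y g n 0 - ∑ S ∈ sD y P n 0, Y * ∏ p ∈ S, g p ≤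
      ∑ S ∈ sD y P n 0, (-1) ^ S.card * (rho (fun m => ∀ p ∈ S, A p m) X : ℝ) := by
    rw [e4, Finset.mul_sum, ← Finset.sum_sub_distrib]
    apply Finset.sum_le_sum
    intro S hS
    have hSP : ∀ p ∈ S, P p := fun p hp => (sD_subset y P n 0 S hS p hp).1
    have hpos : 0 < ∏ p ∈ S, p := Finset.prod_pos fun p hp => (hP p (hSP p hp)).pos
    have h := rho_approx hpos (per_all hA S) X
    rw [rho_prod hA S (fun p hp => hP p (hSP p hp))] at h
    have hgS : ∏ p ∈ S, g p = ((∏ p ∈ S, rho (A p) p : ℕ) : ℝ) / ((∏ p ∈ S, p : ℕ) : ℝ) := by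
      push_cast
      rw [← Finset.prod_div_distrib]
      apply Finset.prod_congr rfl
      intro p hp
      rw [hg, if_pos (hSP p hp)]
    have hpos' : (0 : ℝ) < ((∏ p ∈ S, p : ℕ) : ℝ) := by exact_mod_cast hpos
    have hrem : ((∏ p ∈ S, rho (A p) p : ℕ) : ℝ) ≤ Y * ∏ p ∈ S, g p := by
      have : ((∏ p ∈ S, rho (A p) p : ℕ) : ℝ) = ((∏ p ∈ S, p : ℕ) : ℝ) * ∏ p ∈ S, g p := by
        rw [hgS]; field_simp
      rw [this]
      apply mul_le_mul_of_nonneg_right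
      · push_cast; exact hY S hS
      · exact Finset.prod_nonneg fun p _ => hg0 p
    rw [← hgS] at h
    rw [abs_le] at h
    rcases neg_one_pow_eq_or ℝ S.card with h1 | h1 <;> rw [h1]
    · linarith [h.1]
    · linarith [h.2]
  rw [← Finset.mul_sum] at e6
  have := mul_le_mul_of_nonneg_left e5 hY1
  rw [e1]
  linarith


theorem mert_real : ∃ K : ℝ, 0 ≤ K ∧ ∀ (u : ℝ) (n : ℕ), 2 ≤ u → u ≤ n →
    ∑ p ∈ Finset.Ioc ⌊u⌋₊ n, wtR p ≤
      Real.log (Real.log n) - Real.log (Real.log u) + K / Real.log u := by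
  obtain ⟨C, hC, h⟩ := mert_up
  refine ⟨C + 1, by linarith, fun u n hu hun => ?_⟩
  have hlu : 0 < Real.log u := Real.log_pos (by linarith)
  have hf2 : 2 ≤ ⌊u⌋₊ := Nat.le_floor (by exact_mod_cast hu)
  have hlt : u < ((⌊u⌋₊ + 1 : ℕ) : ℝ) := by push_cast; exact Nat.lt_floor_add_one u
  by_cases hn : ⌊u⌋₊ + 1 ≤ n
  · have e : ∑ p ∈ Finset.Ioc ⌊u⌋₊ n, wtR p = wtR (⌊u⌋₊ + 1) + ∑ p ∈ Finset.Ioc (⌊u⌋₊ + 1) n, wtR p := by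
      rw [← Finset.sum_Ioc_consecutive _ (Nat.le_succ ⌊u⌋₊) hn]; simp
    rw [e]
    have h1 := h (⌊u⌋₊ + 1) n (by omega) hn
    set v : ℝ := ((⌊u⌋₊ + 1 : ℕ) : ℝ) with hv
    have hluv : Real.log u ≤ Real.log v := Real.log_le_log (by linarith) hlt.le
    have h2 : wtR (⌊u⌋₊ + 1) ≤ 1 / Real.log u := by
      unfold wtR
      split_ifs
      · rw [← hv]
        apply one_div_le_one_div_of_le hlu
        have := Real.log_le_sub_one_of_pos (show 0 < u by linarith)
        linarith
      · positivity
    have h3 : Real.log (Real.log u) ≤ Real.log (Real.log v) := Real.log_le_log hlu hluv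
    have h4 : C / Real.log v ≤ C / Real.log u := by gcongr
    rw [add_div]; linarith
  · rw [Finset.Ioc_eq_empty (by omega)]
    have h3 : Real.log (Real.log u) ≤ Real.log (Real.log n) :=
      Real.log_le_log hlu (Real.log_le_log (by linarith) hun)
    have : 0 ≤ (C + 1) / Real.log u := by positivity
    simp; linarith

noncomputable def wtH (k : ℕ) (p : ℕ) : ℝ := k * wtR p + 2 * (k : ℝ) ^ 2 * ((p : ℝ) ^ 2)⁻¹

theorem wtR_nonneg (p : ℕ) : 0 ≤ wtR p := by unfold wtR; split_ifs <;> positivity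
theorem wtH_nonneg (k p : ℕ) : 0 ≤ wtH k p := by
  have := wtR_nonneg p
  unfold wtH; positivity

theorem wtH_sum (k : ℕ) : ∃ K : ℝ, 0 ≤ K ∧ ∀ (u : ℝ) (n : ℕ), 2 ≤ u → u ≤ n →
    ∑ p ∈ Finset.Ioc ⌊u⌋₊ n, wtH k p ≤
      k * (Real.log (Real.log n) - Real.log (Real.log u)) + K / Real.log u := by
  obtain ⟨C, hC, h⟩ := mert_real
  refine ⟨k * C + 4 * k ^ 2, by positivity, fun u n hu hun => ?_⟩
  have hlu : 0 < Real.log u := Real.log_pos (by linarith)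
  have hf2 : 2 ≤ ⌊u⌋₊ := Nat.le_floor (by exact_mod_cast hu)
  have hlt := Nat.lt_floor_add_one u
  have hf2' : (2 : ℝ) ≤ (⌊u⌋₊ : ℝ) := by exact_mod_cast hf2
  have hfn : ⌊u⌋₊ ≤ n := by
    have := Nat.floor_le (show 0 ≤ u by linarith)
    exact_mod_cast this.trans hun
  have h1 := sum_Ioc_inv_sq_le_sub (α := ℝ) (by omega : ⌊u⌋₊ ≠ 0) hfn
  have h2 : ((⌊u⌋₊ : ℝ))⁻¹ ≤ 2 / Real.log u := by
    rw [inv_eq_one_div, div_le_div_iff₀ (by linarith) hlu]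
    have := Real.log_le_sub_one_of_pos (show 0 < u by linarith)
    linarith
  have h3 : (0 : ℝ) ≤ (n : ℝ)⁻¹ := by positivity
  unfold wtH
  rw [Finset.sum_add_distrib, ← Finset.mul_sum, ← Finset.mul_sum]
  have h4 := mul_le_mul_of_nonneg_left (h u n hu hun) (show (0 : ℝ) ≤ k by positivity)
  have h5 : 2 * (k : ℝ) ^ 2 * ∑ p ∈ Finset.Ioc ⌊u⌋₊ n, ((p : ℝ) ^ 2)⁻¹ ≤ 2 * (k : ℝ) ^ 2 * (2 / Real.log u) := by
    apply mul_le_mul_of_nonneg_left _ (by positivity)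
    linarith
  have e : (k * C + 4 * (k : ℝ) ^ 2) / Real.log u = k * (C / Real.log u) + 2 * (k : ℝ) ^ 2 * (2 / Real.log u) := by
    ring
  rw [e]; linarith

theorem neg_log_le {k p : ℕ} {g : ℝ} (hp : p.Prime) (hkp : 2 * k ≤ p) (hg : g ≤ (k : ℝ) / p) :
    -Real.log (1 - g) ≤ wtH k p := by
  have hp0 : (0 : ℝ) < p := by exact_mod_cast hp.pos
  set x := (k : ℝ) / p with hx
  have hx0 : 0 ≤ x := by positivity
  have hx2 : x ≤ 1 / 2 := by
    rw [hx, div_le_div_iff₀ hp0 (by norm_num)]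
    have : (2 * k : ℝ) ≤ p := by exact_mod_cast hkp
    linarith
  have h1 : Real.log (1 - x) ≤ Real.log (1 - g) := Real.log_le_log (by linarith) (by linarith)
  have h2 := Real.one_sub_inv_le_log_of_pos (show 0 < 1 - x by linarith)
  have h3 : (1 - x)⁻¹ ≤ 1 + x + 2 * x ^ 2 := by
    rw [inv_le_iff_one_le_mul₀ (by linarith)]
    nlinarith [mul_nonneg hx0 hx0]
  have h4 : wtH k p = x + 2 * x ^ 2 := by
    unfold wtH wtR
    rw [if_pos hp, hx]; field_simp
  rw [h4]; linarith

noncomputable def lvT (q L : ℝ) (m : ℕ) : ℝ :=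
  if Even m then L * (q ^ (m / 2) + 2 * q ^ (m / 2 + 1) / (1 - q)) else L * (2 * q ^ ((m + 1) / 2) / (1 - q))

theorem lvT_nonneg {q L : ℝ} (hq : 0 < q) (hq1 : q < 1) (hL : 0 ≤ L) (m : ℕ) : 0 ≤ lvT q L m := by
  have : 0 < 1 - q := by linarith
  unfold lvT; split_ifs <;> positivity

theorem lvT_step {q L : ℝ} (hq1 : q < 1) (m : ℕ) :
    q ^ ((m + 1) / 2) * L + lvT q L (m + 1) ≤ lvT q L m := by
  have h1 : 1 - q ≠ 0 := by linarith
  apply le_of_eq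
  unfold lvT
  rcases Nat.even_or_odd' m with ⟨i, rfl | rfl⟩
  · rw [if_neg (by simp), if_pos (by simp)]
    have e1 : (2 * i + 1) / 2 = i := by omega
    have e2 : (2 * i + 1 + 1) / 2 = i + 1 := by omega
    have e3 : 2 * i / 2 = i := by omega
    rw [e1, e2, e3]; ring
  · rw [if_pos (by simp [Nat.even_add_one]), if_neg (by simp)]
    have e2 : (2 * i + 1 + 1) / 2 = i + 1 := by omega
    rw [e2]; field_simp; ring

theorem brun_core (k : ℕ) (hk : 1 ≤ k) : ∃ (w : ℕ) (c τ : ℝ), 2 * k ≤ w ∧ 2 ≤ w ∧ 0 < c ∧ 0 < τ ∧ τ < 4 * k + 1 ∧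
    ∀ (n X : ℕ) (A : ℕ → ℕ → Prop), w ≤ n → (∀ p m, A p m ↔ A p (m % p)) →
      (∀ p, p.Prime → w < p → rho (A p) p ≤ k) →
      c * X / Real.log n ^ k - c⁻¹ * (n : ℝ) ^ τ * Real.log n ^ k ≤
        (rho (fun m => ∀ p ∈ Finset.Ioc 0 n, (p.Prime ∧ w < p) → ¬ A p m) X : ℝ) := by
  obtain ⟨K, hK, hH⟩ := wtH_sum k
  have hk0 : (0 : ℝ) < k := by exact_mod_cast hk
  -- choose q
  obtain ⟨q, hq1, hq2⟩ : ∃ q : ℝ, Real.exp (-(1 / (2 * k))) < q ∧ q < 2 * k / (2 * k + 1) := by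
    apply exists_between
    rw [Real.exp_neg, inv_eq_one_div, div_lt_div_iff₀ (Real.exp_pos _) (by positivity)]
    have := Real.add_one_lt_exp (x := 1 / (2 * (k : ℝ))) (by positivity)
    have h2 := mul_lt_mul_of_pos_left this (show (0 : ℝ) < 2 * k by positivity)
    have e : 2 * (k : ℝ) * (1 / (2 * k) + 1) = 1 + 2 * k := by field_simp
    linarith
  have hq0 : 0 < q := (Real.exp_pos _).trans hq1
  have hqlt : q < 1 := hq2.trans (by rw [div_lt_one (by positivity)]; linarith)
  have h1q : 0 < 1 - q := by linarith
  have hql : -Real.log q < 1 / (2 * k) := by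
    have := Real.log_lt_log (Real.exp_pos _) hq1
    rw [Real.log_exp] at this; linarith
  have hkq : 0 < 1 / 2 - k * (-Real.log q) := by
    have := mul_lt_mul_of_pos_left hql hk0
    have e : (k : ℝ) * (1 / (2 * k)) = 1 / 2 := by field_simp
    linarith
  set η := 1 / 2 - k * (-Real.log q) with hη
  -- choose w
  obtain ⟨w, hw2k, hw2, hwK⟩ : ∃ w : ℕ, 2 * k ≤ w ∧ 2 ≤ w ∧ K / Real.log w ≤ η := by
    have ht : Filter.Tendsto (fun w : ℕ => K / Real.log w) Filter.atTop (nhds 0) :=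
      Filter.Tendsto.div_atTop tendsto_const_nhds (Real.tendsto_log_atTop.comp tendsto_natCast_atTop_atTop)
    have h1 := ht.eventually_le_const hkq
    obtain ⟨w, h⟩ := (h1.and ((Filter.eventually_ge_atTop (2 * k)).and (Filter.eventually_ge_atTop 2))).exists
    exact ⟨w, h.2.1, h.2.2, h.1⟩
  have hw2r : (2 : ℝ) ≤ w := by exact_mod_cast hw2
  have hlw : 0 < Real.log w := Real.log_pos (by linarith)
  set τ := 1 + 2 * q / (1 - q) with hτ
  have hτlt : τ < 4 * k + 1 := by
    have : 2 * q / (1 - q) < 4 * k := by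
      rw [div_lt_iff₀ h1q]
      rw [lt_div_iff₀ (by positivity)] at hq2
      linarith
    linarith
  have hτ0 : 0 < τ := by positivity
  set c1 := Real.exp (k * Real.log (Real.log w) - K / Real.log w) with hc1
  have hc1p : 0 < c1 := Real.exp_pos _
  set c := min (c1 / 10) c1 with hc
  have hcp : 0 < c := lt_min (by positivity) hc1p
  refine ⟨w, c, τ, hw2k, hw2, hcp, hτ0, hτlt, fun n X A hwn hA hρ => ?_⟩
  classical
  have hwnr : (w : ℝ) ≤ n := by exact_mod_cast hwn
  have hn0 : (0 : ℝ) < n := by linarith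
  set L := Real.log n with hL
  have hLp : 0 < L := Real.log_pos (by linarith)
  set P : ℕ → Prop := fun p => p.Prime ∧ w < p with hP
  set g : ℕ → ℝ := fun p => if P p then (rho (A p) p : ℝ) / p else 0 with hg
  have hg0 : ∀ p, 0 ≤ g p := fun p => by simp only [hg]; split_ifs <;> positivity
  have hgk : ∀ p, P p → g p ≤ (k : ℝ) / p := fun p hp => by
    simp only [hg]; rw [if_pos hp]
    gcongr
    exact_mod_cast hρ p hp.1 hp.2
  have hg1 : ∀ p, g p < 1 := fun p => by
    by_cases hp : P p
    · refine (hgk p hp).trans_lt ?_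
      have hp0 : (0 : ℝ) < p := by exact_mod_cast hp.1.pos
      rw [div_lt_one hp0]
      have := hp.2
      exact_mod_cast (by omega : k < p)
    · simp only [hg]; rw [if_neg hp]; norm_num
  have hgz : ∀ p, p ≤ w → g p = 0 := fun p hp => by
    simp only [hg]; rw [if_neg (fun h : P p => by have := h.2; omega)]
  have hgl : ∀ p, -Real.log (1 - g p) ≤ wtH k p := fun p => by
    by_cases hp : P p
    · exact neg_log_le hp.1 (by have := hp.2; omega) (hgk p hp)
    · simp only [hg]; rw [if_neg hp]; simpa using wtH_nonneg k p
  set y : ℕ → ℕ := fun i => ⌊(n : ℝ) ^ (q ^ i)⌋₊ with hy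
  have hn1 : (1 : ℝ) ≤ n := by linarith
  have hyn : ∀ i, y i ≤ n := fun i => by
    have : (n : ℝ) ^ (q ^ i) ≤ (n : ℝ) ^ (1 : ℝ) :=
      Real.rpow_le_rpow_of_exponent_le hn1 (pow_le_one₀ hq0.le hqlt.le)
    rw [Real.rpow_one] at this
    exact Nat.floor_le_of_le this
  -- generic tail bound
  have tail : ∀ u : ℝ, (w : ℝ) ≤ u → u ≤ n → ∀ a : ℕ, (∀ p, a < p → p ≤ ⌊u⌋₊ → p ≤ w) →
      ∑ p ∈ Finset.Ioc a n, (-Real.log (1 - g p)) ≤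
        k * (Real.log L - Real.log (Real.log u)) + K / Real.log w := by
    intro u hwu hun a ha
    have h1 := hH u n (by linarith) hun
    have h2 : K / Real.log u ≤ K / Real.log w := by
      gcongr
    have h3 : ∑ p ∈ Finset.Ioc a n, (-Real.log (1 - g p)) ≤ ∑ p ∈ Finset.Ioc ⌊u⌋₊ n, wtH k p := by
      calc _ ≤ ∑ p ∈ Finset.Ioc a n, (if ⌊u⌋₊ < p then wtH k p else 0) := by
            apply Finset.sum_le_sum
            intro p hp
            rw [Finset.mem_Ioc] at hp
            split_ifs with h
            · exact hgl p
            · rw [hgz p (ha p hp.1 (by omega))]; simp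
        _ = ∑ p ∈ (Finset.Ioc a n).filter (fun p => ⌊u⌋₊ < p), wtH k p := by rw [Finset.sum_filter]
        _ ≤ _ := by
            apply Finset.sum_le_sum_of_subset_of_nonneg
            · intro p hp
              simp only [Finset.mem_filter, Finset.mem_Ioc] at hp ⊢
              exact ⟨hp.2, hp.1.2⟩
            · intro p _ _; exact wtH_nonneg k p
    linarith
  have hs : ∀ i, 1 ≤ i → ∑ p ∈ Finset.Ioc (y i) n, (-Real.log (1 - g p)) ≤ (i : ℝ) / 2 := by
    intro i hi
    have hi1 : (1 : ℝ) ≤ i := by exact_mod_cast hi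
    have hle : (n : ℝ) ^ (q ^ i) ≤ n := by
      have : (n : ℝ) ^ (q ^ i) ≤ (n : ℝ) ^ (1 : ℝ) :=
        Real.rpow_le_rpow_of_exponent_le hn1 (pow_le_one₀ hq0.le hqlt.le)
      rwa [Real.rpow_one] at this
    have h1 := tail (max ((n : ℝ) ^ (q ^ i)) w) (le_max_right _ _) (max_le hle hwnr) (y i) (by
      intro p hp1 hp2
      rcases le_total ((n : ℝ) ^ (q ^ i)) (w : ℝ) with h | h
      · rw [max_eq_right h] at hp2; simpa using hp2
      · rw [max_eq_left h] at hp2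
        have : y i = ⌊(n : ℝ) ^ (q ^ i)⌋₊ := rfl
        omega)
    have h2 : Real.log L + i * Real.log q ≤ Real.log (Real.log (max ((n : ℝ) ^ (q ^ i)) w)) := by
      have e : Real.log L + i * Real.log q = Real.log (q ^ i * L) := by
        rw [Real.log_mul (by positivity) hLp.ne', Real.log_pow]; ring
      rw [e]
      apply Real.log_le_log (by positivity)
      rw [hL, ← Real.log_rpow hn0]
      exact Real.log_le_log (by positivity) (le_max_left _ _)
    have h3 : (k : ℝ) * (Real.log L - Real.log (Real.log (max ((n : ℝ) ^ (q ^ i)) w))) ≤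
        k * (i * (-Real.log q)) := by
      apply mul_le_mul_of_nonneg_left _ hk0.le
      linarith
    have h4 : η ≤ i * η := by nlinarith
    have h5 : (i : ℝ) * η = i / 2 - k * (i * (-Real.log q)) := by rw [hη]; ring
    linarith
  have hmain := sPhi_main y hg0 hg1 n (fun i _ => hyn i) hs
  have tailw := tail w (le_refl _) hwnr 0 (by intro p _ hp; simpa using hp)
  have hexp : Real.exp (k * (Real.log L - Real.log (Real.log w)) + K / Real.log w) = c1⁻¹ * L ^ k := by
    rw [hc1, ← Real.exp_neg]
    have : L ^ k = Real.exp (k * Real.log L) := by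
      rw [Real.exp_nat_mul, Real.exp_log hLp]
    rw [this, ← Real.exp_add]; ring_nf
  have hV : c1 / L ^ k ≤ sV g n := by
    have e : sV g n = Real.exp (-∑ p ∈ Finset.Ioc 0 n, (-Real.log (1 - g p))) := by
      rw [Finset.sum_neg_distrib, neg_neg, Real.exp_sum, sV]
      apply Finset.prod_congr rfl
      intro p _
      rw [Real.exp_log (sub_pos.2 (hg1 p))]
    have e2 : c1 / L ^ k = Real.exp (-(k * (Real.log L - Real.log (Real.log w)) + K / Real.log w)) := by
      rw [Real.exp_neg, hexp, mul_inv, inv_inv, div_eq_mul_inv]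
    rw [e, e2]
    apply Real.exp_le_exp.2
    linarith
  have hU : ∏ p ∈ Finset.Ioc 0 n, (1 + g p) ≤ c1⁻¹ * L ^ k := by
    rw [← hexp]
    calc ∏ p ∈ Finset.Ioc 0 n, (1 + g p) ≤ ∏ p ∈ Finset.Ioc 0 n, Real.exp (-Real.log (1 - g p)) := by
          apply Finset.prod_le_prod
          · intro p _; linarith [hg0 p]
          · intro p _
            have h1 := Real.add_one_le_exp (g p)
            have h2 := Real.log_le_sub_one_of_pos (sub_pos.2 (hg1 p))
            have h3 : Real.exp (g p) ≤ Real.exp (-Real.log (1 - g p)) :=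
              Real.exp_le_exp.2 (by linarith)
            linarith
      _ ≤ _ := by
          rw [← Real.exp_sum]
          exact Real.exp_le_exp.2 tailw
  have hlev : ∀ S ∈ sD y P n 0, ∏ p ∈ S, (p : ℝ) ≤ (n : ℝ) ^ τ := by
    intro S hS
    have h1 := sD_level y P (fun i => q ^ i * L) (lvT q L) (by
      intro i p hp hpy
      have hp0 : (0 : ℝ) < p := by exact_mod_cast hp
      have : (p : ℝ) ≤ (n : ℝ) ^ (q ^ i) := (Nat.le_floor_iff (by positivity)).1 hpy
      have h2 := Real.log_le_log hp0 this
      rwa [Real.log_rpow hn0] at h2) (lvT_nonneg hq0 hqlt hLp.le) (lvT_step hqlt) n 0 (by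
      intro _
      simp [hy]) S hS
    have hpos : ∀ p ∈ S, (0 : ℝ) < p := fun p hp => by
      exact_mod_cast (sD_subset y P n 0 S hS p hp).2.1
    have e : ∏ p ∈ S, (p : ℝ) = Real.exp (∑ p ∈ S, Real.log p) := by
      rw [Real.exp_sum]
      apply Finset.prod_congr rfl
      intro p hp
      rw [Real.exp_log (hpos p hp)]
    have e2 : lvT q L 0 = L * τ := by
      unfold lvT; simp [hτ]
    rw [e, Real.rpow_def_of_pos hn0, ← hL, ← e2]
    exact Real.exp_le_exp.2 h1
  have hfin := sieve_lower y P (fun p hp => hp.1) A hA n X ((n : ℝ) ^ τ) hlev g (fun p => by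
    simp only [hg]
    split_ifs <;> rfl)
  have hcard : (((Finset.range X).filter (fun m => ∀ p ∈ Finset.Ioc 0 n, P p → ¬ A p m)).card : ℝ) =
      (rho (fun m => ∀ p ∈ Finset.Ioc 0 n, (p.Prime ∧ w < p) → ¬ A p m) X : ℝ) := by
    unfold rho
    congr!
  rw [hcard] at hfin
  refine le_trans ?_ hfin
  have hX0 : (0 : ℝ) ≤ X := by positivity
  have f1 : c * X / L ^ k ≤ X * sPhi y g n 0 := by
    calc c * X / L ^ k ≤ c1 / 10 * X / L ^ k := by gcongr; exact min_le_left _ _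
      _ = X * (c1 / L ^ k / 10) := by ring
      _ ≤ X * (sV g n / 10) := by gcongr
      _ ≤ _ := by gcongr
  have f2 : (n : ℝ) ^ τ * ∏ p ∈ Finset.Ioc 0 n, (1 + g p) ≤ c⁻¹ * (n : ℝ) ^ τ * L ^ k := by
    calc _ ≤ (n : ℝ) ^ τ * (c1⁻¹ * L ^ k) := by gcongr
      _ ≤ (n : ℝ) ^ τ * (c⁻¹ * L ^ k) := by gcongr; exact min_le_right _ _
      _ = _ := by ring
  linarith


theorem rho_eq (A : ℕ → Prop) [DecidablePred A] (d : ℕ) :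
    rho A d = ((Finset.range d).filter A).card := by
  rw [rho]
  congr!

theorem Fcong {k : ℕ} {a b : Fin k → ℤ} {F : ℤ → ℤ} (hF : ∀ n : ℤ, F n = ∏ i, (a i * n + b i))
    (x y : ℤ) : x - y ∣ F x - F y := by
  have e : ∀ n, F n = (∏ i, (Polynomial.C (a i) * Polynomial.X + Polynomial.C (b i))).eval n := by
    intro n
    rw [hF, Polynomial.eval_prod]
    simp
  rw [e, e]
  exact Polynomial.sub_dvd_eval_sub x y _

theorem Fdvd_iff {k : ℕ} {a b : Fin k → ℤ} {F : ℤ → ℤ}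
    (hF : ∀ n : ℤ, F n = ∏ i, (a i * n + b i)) {d x y : ℤ} (h : d ∣ x - y) : d ∣ F x ↔ d ∣ F y := by
  have := h.trans (Fcong hF x y)
  constructor
  · intro h1
    have := dvd_sub h1 this
    simpa using this
  · intro h1
    have := dvd_add this h1
    simpa using this

theorem natmod_dvd (p m : ℕ) : (p : ℤ) ∣ (m : ℤ) - ((m % p : ℕ) : ℤ) := by
  push_cast
  exact Int.dvd_self_sub_emod

theorem Fper {k : ℕ} {a b : Fin k → ℤ} {F : ℤ → ℤ}
    (hF : ∀ n : ℤ, F n = ∏ i, (a i * n + b i)) (p m : ℕ) :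
    (p : ℤ) ∣ F (m : ℤ) ↔ (p : ℤ) ∣ F ((m % p : ℕ) : ℤ) :=
  Fdvd_iff hF (natmod_dvd p m)

theorem not_both {k : ℕ} {a b : Fin k → ℤ} {F : ℤ → ℤ} (hF : ∀ n : ℤ, F n = ∏ i, (a i * n + b i))
    {p : ℕ} (h : ∃ n : ℤ, ¬ ((p : ℤ) ∣ F n)) (i : Fin k) (h1 : (p : ℤ) ∣ a i) : ¬ (p : ℤ) ∣ b i := by
  intro h2
  obtain ⟨n, hn⟩ := h
  apply hn
  rw [hF]
  exact (dvd_add (h1.mul_right n) h2).trans (Finset.dvd_prod_of_mem _ (Finset.mem_univ i))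

theorem nu_le {k p : ℕ} (hp : p.Prime) (a b : Fin k → ℤ) (h : ∀ i, (p : ℤ) ∣ a i → ¬ (p : ℤ) ∣ b i) :
    rho (fun m => (p : ℤ) ∣ ∏ i, (a i * (m : ℤ) + b i)) p ≤ k := by
  classical
  have hpz : Prime (p : ℤ) := Nat.prime_iff_prime_int.1 hp
  rw [rho_eq]
  calc _ ≤ (Finset.univ.biUnion fun i : Fin k =>
        (Finset.range p).filter (fun m : ℕ => (p : ℤ) ∣ a i * (m : ℤ) + b i)).card := by
        apply Finset.card_le_card
        intro m hm
        simp only [Finset.mem_filter, Finset.mem_range, Finset.mem_biUnion, Finset.mem_univ,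
          true_and] at hm ⊢
        obtain ⟨i, _, hi⟩ := (Prime.dvd_finsetProd_iff hpz _).1 hm.2
        exact ⟨i, hm.1, hi⟩
    _ ≤ ∑ i : Fin k, 1 := by
        refine Finset.card_biUnion_le.trans (Finset.sum_le_sum fun i _ => ?_)
        rw [Finset.card_le_one]
        intro x hx y hy
        simp only [Finset.mem_filter, Finset.mem_range] at hx hy
        have h1 : (p : ℤ) ∣ a i * ((x : ℤ) - y) := by
          have := dvd_sub hx.2 hy.2
          ring_nf at this ⊢
          exact this
        rcases hpz.dvd_or_dvd h1 with h2 | h2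
        · exact absurd ((dvd_add_right (h2.mul_right _)).1 hx.2) (h i h2)
        · have : (y : ℤ) ≡ x [ZMOD p] := (Int.modEq_iff_dvd).2 h2
          have := (Int.natCast_modEq_iff).1 this
          exact (Nat.ModEq.eq_of_lt_of_lt this hy.1 hx.1).symm
    _ = k := by simp

theorem nu_ge {k p : ℕ} (hp : p.Prime) (a b : Fin k → ℤ)
    (hd : ¬ (p : ℤ) ∣ (∏ i, a i) *
      ∏ i, ∏ j ∈ Finset.univ.filter (fun j => j ≠ i), (a i * b j - b i * a j)) :
    k ≤ rho (fun m => (p : ℤ) ∣ ∏ i, (a i * (m : ℤ) + b i)) p := by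
  classical
  haveI : Fact p.Prime := ⟨hp⟩
  have ha : ∀ i, ((a i : ℤ) : ZMod p) ≠ 0 := by
    intro i hi
    rw [ZMod.intCast_zmod_eq_zero_iff_dvd] at hi
    exact hd ((hi.trans (Finset.dvd_prod_of_mem _ (Finset.mem_univ i))).mul_right _)
  set r : Fin k → ZMod p := fun i => -(b i : ZMod p) / (a i : ZMod p) with hr
  have hri : ∀ i, (a i : ZMod p) * r i + b i = 0 := by
    intro i
    have := ha i
    simp only [hr]
    field_simp
    ring
  have hinj : Function.Injective r := by
    intro i j hij
    by_contra hne
    apply hd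
    apply Dvd.dvd.mul_left
    have h1 : (p : ℤ) ∣ a i * b j - b i * a j := by
      rw [← ZMod.intCast_zmod_eq_zero_iff_dvd]
      push_cast
      have e1 := hri i
      have e2 := hri j
      rw [← hij] at e2
      linear_combination (a i : ZMod p) * e2 - (a j : ZMod p) * e1
    refine h1.trans ?_
    refine Dvd.dvd.trans ?_ (Finset.dvd_prod_of_mem _ (Finset.mem_univ i))
    exact Finset.dvd_prod_of_mem (fun j => a i * b j - b i * a j)
      (Finset.mem_filter.2 ⟨Finset.mem_univ j, fun h => hne h.symm⟩)
  rw [rho_eq]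
  calc k = (Finset.univ.image fun i => (r i).val).card := by
        rw [Finset.card_image_of_injective]
        · simp
        · exact (ZMod.val_injective p).comp hinj
    _ ≤ _ := by
        apply Finset.card_le_card
        intro m hm
        simp only [Finset.mem_image, Finset.mem_univ, true_and] at hm
        obtain ⟨i, rfl⟩ := hm
        rw [Finset.mem_filter]
        refine ⟨Finset.mem_range.2 (ZMod.val_lt _), ?_⟩
        refine Dvd.dvd.trans ?_ (Finset.dvd_prod_of_mem _ (Finset.mem_univ i))
        rw [← ZMod.intCast_zmod_eq_zero_iff_dvd]
        push_cast
        rw [ZMod.natCast_zmod_val]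
        exact hri i

theorem primor_pos (z : ℝ) : 0 < primor z := by
  unfold primor
  apply Finset.prod_pos
  intro p hp
  exact (Finset.mem_filter.1 hp).2.pos

theorem gcd_primor (x : ℤ) (z : ℝ) : Int.gcd x (primor z) = 1 ↔
    ∀ p ∈ (Finset.range (⌊z⌋₊ + 1)).filter Nat.Prime, ¬ (p : ℤ) ∣ x := by
  constructor
  · intro h p hp hx
    have h1 : (p : ℤ) ∣ (primor z : ℤ) := by
      unfold primor
      exact_mod_cast Finset.dvd_prod_of_mem (fun p : ℕ => p) hp
    have h2 := Int.dvd_coe_gcd hx h1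
    rw [h] at h2
    have h3 : p ∣ 1 := by exact_mod_cast h2
    exact (Finset.mem_filter.1 hp).2.one_lt.ne' (Nat.dvd_one.1 h3)
  · intro h
    rw [Int.gcd_eq_natAbs, Int.natAbs_natCast]
    unfold primor
    apply Nat.Coprime.prod_right
    intro p hp
    have hpp := (Finset.mem_filter.1 hp).2
    rw [Nat.coprime_comm, hpp.coprime_iff_not_dvd]
    intro h1
    exact h p hp (Int.natCast_dvd.2 h1)

theorem rho_compl (A : ℕ → Prop) (d : ℕ) : rho (fun m => ¬ A m) d + rho A d = d := by
  classical
  rw [rho_eq, rho_eq]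
  have := Finset.card_filter_add_card_filter_not (s := Finset.range d) A
  rw [Finset.card_range] at this
  rw [add_comm]
  convert this

theorem exists_beta {k : ℕ} {a b : Fin k → ℤ} {F : ℤ → ℤ}
    (hF : ∀ n : ℤ, F n = ∏ i, (a i * n + b i))
    (hadm : ∀ p : ℕ, p.Prime → ∃ n : ℤ, ¬ ((p : ℤ) ∣ F n)) (S : Finset ℕ) (hS : ∀ p ∈ S, p.Prime) :
    ∃ β : ℕ, ∀ p ∈ S, ¬ (p : ℤ) ∣ F β := by
  classical
  have h := rho_prod (A := fun p m => ¬ (p : ℤ) ∣ F (m : ℤ)) (fun p m => not_congr (Fper hF p m)) S hS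
  have h2 : 0 < ∏ p ∈ S, rho (fun m => ¬ (p : ℤ) ∣ F (m : ℤ)) p := by
    apply Finset.prod_pos
    intro p hp
    obtain ⟨n, hn⟩ := hadm p (hS p hp)
    rw [rho_eq]
    rw [Finset.card_pos]
    have hp0 : (0 : ℤ) < p := by exact_mod_cast (hS p hp).pos
    refine ⟨(n % p).toNat, ?_⟩
    have h0 := Int.emod_nonneg n hp0.ne'
    have h1 := Int.emod_lt_of_pos n hp0
    rw [Finset.mem_filter, Finset.mem_range]
    refine ⟨by omega, ?_⟩
    rw [Int.toNat_of_nonneg h0]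
    intro h3
    exact hn ((Fdvd_iff hF Int.dvd_self_sub_emod).2 h3)
  rw [← h] at h2
  rw [rho_eq] at h2
  obtain ⟨β, hβ⟩ := Finset.card_pos.1 h2
  exact ⟨β, (Finset.mem_filter.1 hβ).2⟩


theorem log_pow_ev (m : ℕ) {s ε : ℝ} (hs : 0 < s) (hε : 0 < ε) :
    ∀ᶠ N : ℕ in Filter.atTop, Real.log N ^ m ≤ ε * (N : ℝ) ^ s := by
  have h := (isLittleO_log_rpow_rpow_atTop (m : ℝ) hs).bound hε
  have h2 := tendsto_natCast_atTop_atTop (R := ℝ) |>.eventually h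
  filter_upwards [h2] with N hN
  rw [Real.rpow_natCast, Real.norm_of_nonneg (by positivity), Real.norm_of_nonneg (by positivity)] at hN
  exact hN

theorem lower_bd {k : ℕ} (hk : 1 ≤ k) {a b : Fin k → ℤ} {F : ℤ → ℤ}
    (hF : ∀ n : ℤ, F n = ∏ i, (a i * n + b i))
    (hadm : ∀ p : ℕ, p.Prime → ∃ n : ℤ, ¬ ((p : ℤ) ∣ F n)) :
    ∃ c : ℝ, 0 < c ∧ ∀ᶠ N : ℕ in Filter.atTop,
      c * N / Real.log N ^ k ≤ ((SFset F N ((N : ℝ) ^ ((1 : ℝ) / (4 * k + 1)))).card : ℝ) := by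
  classical
  obtain ⟨w, c, τ, hw1, hw2, hc, hτ, hτk, H⟩ := brun_core k hk
  set S : Finset ℕ := (Finset.range (w + 1)).filter Nat.Prime with hS
  have hSp : ∀ p ∈ S, p.Prime := fun p hp => (Finset.mem_filter.1 hp).2
  obtain ⟨β, hβ⟩ := exists_beta hF hadm S hSp
  set W : ℕ := ∏ p ∈ S, p with hW
  have hW0 : 0 < W := Finset.prod_pos fun p hp => (hSp p hp).pos
  have hWr : (0 : ℝ) < W := by exact_mod_cast hW0
  set e : ℝ := (1 : ℝ) / (4 * k + 1) with he
  have he0 : 0 < e := by positivity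
  have heτ : 0 < 1 - e * τ := by
    rw [he, one_div_mul_eq_div, sub_pos, div_lt_one (by positivity)]
    exact hτk
  refine ⟨c / (4 * W), by positivity, ?_⟩
  have ev1 : ∀ᶠ N : ℕ in Filter.atTop, ((w + 3 : ℕ) : ℝ) ≤ (N : ℝ) ^ e :=
    ((tendsto_rpow_atTop he0).comp tendsto_natCast_atTop_atTop).eventually_ge_atTop _
  filter_upwards [ev1, log_pow_ev (2 * k) heτ (ε := c ^ 2 / (4 * W)) (by positivity),
    Filter.eventually_ge_atTop (2 * (β + 2 * W) + 3)] with N h1 h2 h3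
  set n := ⌊(N : ℝ) ^ e⌋₊ with hn
  have hwn : w + 3 ≤ n := Nat.le_floor h1
  set X := (N - (β + W)) / W with hX
  have hN1 : (1 : ℝ) ≤ N := by exact_mod_cast (show 1 ≤ N by omega)
  have hN0 : (0 : ℝ) < N := by linarith
  have hnN : (n : ℝ) ≤ (N : ℝ) ^ e := Nat.floor_le (by positivity)
  have hn3 : (3 : ℝ) ≤ n := by exact_mod_cast (show 3 ≤ n by omega)
  have he1 : e ≤ 1 := by
    rw [he, div_le_one (by positivity)]
    have : (0 : ℝ) ≤ k := by positivity
    linarith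
  have hnN2 : (n : ℝ) ≤ N := hnN.trans (by
    calc (N : ℝ) ^ e ≤ (N : ℝ) ^ (1 : ℝ) := Real.rpow_le_rpow_of_exponent_le hN1 he1
      _ = N := Real.rpow_one _)
  have hln : 0 < Real.log n := Real.log_pos (by linarith)
  have hlN : Real.log n ≤ Real.log N := Real.log_le_log (by linarith) hnN2
  have hlN0 : 0 < Real.log N := by linarith
  have hXl : (N : ℝ) / (2 * W) ≤ X := by
    have hm := Nat.div_add_mod (N - (β + W)) W
    have hl := Nat.mod_lt (N - (β + W)) hW0
    rw [← hX] at hm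
    have : N ≤ 2 * (W * X) := by omega
    have : (N : ℝ) ≤ 2 * (W * X) := by exact_mod_cast this
    rw [div_le_iff₀ (by positivity)]
    linarith
  have hXu : W * X ≤ N - (β + W) := Nat.mul_div_le _ _
  have hA := H n X (fun p m => (p : ℤ) ∣ F (((β + W + W * m : ℕ) : ℕ) : ℤ)) (by omega) (by
    intro p m
    apply Fdvd_iff hF
    push_cast
    have := (Int.dvd_self_sub_emod : (p : ℤ) ∣ (m : ℤ) - (m : ℤ) % (p : ℤ))
    have h4 := this.mul_left (W : ℤ)
    ring_nf at h4 ⊢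
    exact h4) (by
    intro p hp hwp
    have hpz : Prime (p : ℤ) := Nat.prime_iff_prime_int.1 hp
    have hpW : ¬ (p : ℤ) ∣ W := by
      intro h
      have h : p ∣ W := by exact_mod_cast h
      obtain ⟨q, hq, hpq⟩ := (Prime.dvd_finsetProd_iff hp.prime _).1 h
      have hq' := Finset.mem_filter.1 hq
      have := (Nat.prime_dvd_prime_iff_eq hp hq'.2).1 hpq
      have := Finset.mem_range.1 hq'.1
      omega
    have h5 := nu_le hp (fun i => a i * W) (fun i => a i * (β + W) + b i) (by
      intro i hi hb
      have hi' := (hpz.dvd_or_dvd hi).resolve_right hpW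
      exact not_both hF (hadm p hp) i hi' ((dvd_add_right (hi'.mul_right _)).1 hb))
    convert h5 using 5 with m
    rw [hF]
    apply Finset.prod_congr rfl
    intro i _
    push_cast
    ring)
  have hcard : rho (fun m => ∀ p ∈ Finset.Ioc 0 n, (p.Prime ∧ w < p) →
      ¬ (p : ℤ) ∣ F (((β + W + W * m : ℕ) : ℕ) : ℤ)) X ≤ (SFset F N ((N : ℝ) ^ e)).card := by
    rw [rho_eq]
    apply Finset.card_le_card_of_injOn (fun m => β + W + W * m)
    · intro m hm
      have hm' := Finset.mem_filter.1 hm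
      have hmX := Finset.mem_range.1 hm'.1
      have hmW : W * m ≤ W * X := Nat.mul_le_mul_left _ hmX.le
      rw [SFset]
      simp only [Finset.coe_filter, Finset.mem_Icc, Set.mem_ofPred_eq]
      refine ⟨⟨by omega, by omega⟩, ?_⟩
      rw [gcd_primor]
      intro p hp
      have hp' := Finset.mem_filter.1 hp
      have hpn := Finset.mem_range.1 hp'.1
      by_cases hpw : p ≤ w
      · have hpS : p ∈ S := Finset.mem_filter.2 ⟨Finset.mem_range.2 (by omega), hp'.2⟩
        have hpW : (p : ℤ) ∣ W := by exact_mod_cast Finset.dvd_prod_of_mem (fun p : ℕ => p) hpS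
        rw [Fdvd_iff hF (y := (β : ℤ))]
        · exact hβ p hpS
        · have := hpW.mul_right (1 + m : ℤ)
          push_cast
          ring_nf at this ⊢
          exact this
      · exact hm'.2 p (Finset.mem_Ioc.2 ⟨hp'.2.pos, by omega⟩) ⟨hp'.2, by omega⟩
    · intro x _ y _ hxy
      have : W * x = W * y := by simpa using hxy
      exact Nat.eq_of_mul_eq_mul_left hW0 this
  refine le_trans ?_ (hA.trans (by exact_mod_cast hcard))
  have f1 : c * ((N : ℝ) / (2 * W)) / Real.log N ^ k ≤ c * X / Real.log n ^ k := by gcongr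
  have f2 : c⁻¹ * (n : ℝ) ^ τ * Real.log n ^ k ≤ c / (4 * W) * N / Real.log N ^ k := by
    have g1 : (n : ℝ) ^ τ ≤ (N : ℝ) ^ (e * τ) := by
      rw [Real.rpow_mul hN0.le]
      gcongr
    calc c⁻¹ * (n : ℝ) ^ τ * Real.log n ^ k ≤ c⁻¹ * (N : ℝ) ^ (e * τ) * Real.log N ^ k := by gcongr
      _ ≤ _ := by
        rw [le_div_iff₀ (by positivity)]
        calc c⁻¹ * (N : ℝ) ^ (e * τ) * Real.log N ^ k * Real.log N ^ k
            = c⁻¹ * (N : ℝ) ^ (e * τ) * Real.log N ^ (2 * k) := by ring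
          _ ≤ c⁻¹ * (N : ℝ) ^ (e * τ) * (c ^ 2 / (4 * W) * (N : ℝ) ^ (1 - e * τ)) := by gcongr
          _ = c⁻¹ * c ^ 2 / (4 * W) * ((N : ℝ) ^ (e * τ) * (N : ℝ) ^ (1 - e * τ)) := by ring
          _ = c / (4 * W) * N := by
              rw [← Real.rpow_add hN0]
              simp only [add_sub_cancel, Real.rpow_one]
              field_simp
  have f3 : c * ((N : ℝ) / (2 * W)) / Real.log N ^ k = 2 * (c / (4 * W) * N / Real.log N ^ k) := by
    field_simp
    ring
  linarith


theorem good_card {k : ℕ} {a b : Fin k → ℤ} {F : ℤ → ℤ}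
    (hF : ∀ n : ℤ, F n = ∏ i, (a i * n + b i)) (z : ℝ) :
    ((Finset.range (primor z)).filter (fun m : ℕ => Int.gcd (F m) (primor z) = 1)).card
      = ∏ p ∈ (Finset.range (⌊z⌋₊ + 1)).filter Nat.Prime, rho (fun m => ¬ (p : ℤ) ∣ F (m : ℤ)) p := by
  classical
  rw [← rho_prod (A := fun p m => ¬ (p : ℤ) ∣ F (m : ℤ)) (fun p m => not_congr (Fper hF p m)) _
    (fun p hp => (Finset.mem_filter.1 hp).2), rho_eq]
  unfold primor
  congr 1
  apply Finset.filter_congr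
  intro m _
  exact gcd_primor (F m) z

theorem good_bd {k : ℕ} {a b : Fin k → ℤ} {F : ℤ → ℤ}
    (hF : ∀ n : ℤ, F n = ∏ i, (a i * n + b i))
    (hdisc : (∏ i, a i) *
      ∏ i, ∏ j ∈ Finset.univ.filter (fun j => j ≠ i), (a i * b j - b i * a j) ≠ 0) :
    ∃ C : ℝ, 0 < C ∧ ∀ z : ℝ, C ≤ z →
    (((Finset.range (primor z)).filter (fun m : ℕ => Int.gcd (F m) (primor z) = 1)).card : ℝ)
      ≤ C * primor z / Real.log z ^ k := by
  classical
  obtain ⟨K, hK, H⟩ := mert_lo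
  set D := (∏ i, a i) *
      ∏ i, ∏ j ∈ Finset.univ.filter (fun j => j ≠ i), (a i * b j - b i * a j) with hD
  set u : ℕ := D.natAbs + 2 with hu
  have hlu : 0 < Real.log u := Real.log_pos (by exact_mod_cast (show 1 < u by omega))
  set C0 : ℝ := Real.exp (k * (Real.log (Real.log u) + K / Real.log u)) * 2 ^ k with hC0
  have hC00 : 0 < C0 := by positivity
  refine ⟨max C0 (u + 4), by positivity, fun z hz => ?_⟩
  have hzu : (u : ℝ) + 4 ≤ z := (le_max_right _ _).trans hz
  have hu0 : (0 : ℝ) ≤ u := by positivity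
  set n := ⌊z⌋₊ with hn
  have hun : u ≤ n := Nat.le_floor (by linarith)
  have hm := H u n (by omega) hun
  have hzn : z < n + 1 := Nat.lt_floor_add_one z
  have hn4 : (3 : ℝ) ≤ n := by linarith
  have hln : 0 < Real.log n := Real.log_pos (by linarith)
  have hlz : 0 < Real.log z := Real.log_pos (by linarith)
  have hlnz : Real.log z ≤ 2 * Real.log n := by
    have e2 : 2 * Real.log n = Real.log ((n : ℝ) ^ 2) := by
      rw [Real.log_pow]
      norm_num
    rw [e2]
    apply Real.log_le_log (by linarith)
    nlinarith
  rw [good_card hF]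
  push_cast
  have step : ∀ p ∈ (Finset.range (n + 1)).filter Nat.Prime,
      (rho (fun m => ¬ (p : ℤ) ∣ F (m : ℤ)) p : ℝ) ≤
        p * (if u < p then Real.exp (-(k * wtR p)) else 1) := by
    intro p hp
    have hpp := (Finset.mem_filter.1 hp).2
    have hp0 : (0 : ℝ) < p := by exact_mod_cast hpp.pos
    have h1 := rho_compl (fun m => (p : ℤ) ∣ F (m : ℤ)) p
    split_ifs with h
    · have h2 : k ≤ rho (fun m => (p : ℤ) ∣ F (m : ℤ)) p := by
        have h3 := nu_ge hpp a b (by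
          rw [← hD]
          intro h4
          have h5 : p ∣ D.natAbs := Int.natCast_dvd.1 h4
          have := Nat.le_of_dvd (Int.natAbs_pos.2 hdisc) h5
          omega)
        simpa only [hF] using h3
      have h3 : (rho (fun m => ¬ (p : ℤ) ∣ F (m : ℤ)) p : ℝ) + k ≤ p := by
        exact_mod_cast (show _ + k ≤ p by omega)
      have h4 := Real.add_one_le_exp (-(k * wtR p))
      have h5 : p * (-(k * wtR p) + 1) = (p : ℝ) - k := by
        rw [wtR, if_pos hpp]
        field_simp
        ring
      have h6 := mul_le_mul_of_nonneg_left h4 hp0.le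
      linarith
    · rw [mul_one]
      exact_mod_cast (show _ ≤ p by omega)
  calc _ ≤ ∏ p ∈ (Finset.range (n + 1)).filter Nat.Prime,
        ((p : ℝ) * (if u < p then Real.exp (-(k * wtR p)) else 1)) :=
        Finset.prod_le_prod (fun p _ => by positivity) step
    _ = primor z * Real.exp (-(k * ∑ p ∈ Finset.Ioc u n, wtR p)) := by
        rw [Finset.prod_mul_distrib]
        congr 1
        · unfold primor
          push_cast
          rfl
        · rw [← Finset.prod_filter, Finset.mul_sum, ← Finset.sum_neg_distrib, Real.exp_sum]
          apply Finset.prod_subset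
          · intro p hp
            simp only [Finset.mem_filter, Finset.mem_range, Finset.mem_Ioc] at hp ⊢
            omega
          · intro p hp hnp
            simp only [Finset.mem_filter, Finset.mem_range, Finset.mem_Ioc] at hp hnp
            have : ¬ p.Prime := fun h => hnp ⟨⟨by omega, h⟩, hp.1⟩
            simp [wtR, this]
    _ ≤ primor z * (C0 / Real.log z ^ k) := by
        gcongr
        have e1 : Real.exp (-(k * Real.log (Real.log n))) = (Real.log n ^ k)⁻¹ := by
          rw [Real.exp_neg, Real.exp_nat_mul, Real.exp_log hln]
        calc _ ≤ Real.exp (k * (Real.log (Real.log u) + K / Real.log u)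
                + -(k * Real.log (Real.log n))) := by
              apply Real.exp_le_exp.2
              have : (k : ℝ) * (Real.log (Real.log n) - Real.log (Real.log u) - K / Real.log u)
                ≤ k * ∑ p ∈ Finset.Ioc u n, wtR p := by gcongr
              linarith
          _ = Real.exp (k * (Real.log (Real.log u) + K / Real.log u)) * (Real.log n ^ k)⁻¹ := by
              rw [Real.exp_add, e1]
          _ ≤ _ := by
              rw [hC0, le_div_iff₀ (by positivity), mul_assoc]
              gcongr
              rw [inv_mul_le_iff₀ (by positivity), ← mul_pow, mul_comm]
              gcongr
    _ = C0 * primor z / Real.log z ^ k := by ring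
    _ ≤ _ := by
        gcongr
        exact le_max_left _ _


theorem stmt1
    (k : ℕ) (hk : 1 ≤ k) (a b : Fin k → ℤ) (ha : ∀ i, a i ≠ 0)
    (F : ℤ → ℤ) (hF : ∀ n : ℤ, F n = ∏ i, (a i * n + b i))
    (hdisc : (∏ i, a i) *
      ∏ i, ∏ j ∈ Finset.univ.filter (fun j => j ≠ i), (a i * b j - b i * a j) ≠ 0)
    (hadm : ∀ p : ℕ, p.Prime → ∃ n : ℤ, ¬ ((p : ℤ) ∣ F n)) :
    ∃ (c : ℝ) (N₀ : ℕ), 0 < c ∧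
      ∀ N : ℕ, N₀ ≤ N →
        ∀ A : Finset ℕ, A ⊆ SFset F N ((N : ℝ) ^ ((1 : ℝ) / (4 * k + 1))) →
          ∀ δ : ℝ, 0 < δ →
            (A.card : ℝ) =
              δ * ((SFset F N ((N : ℝ) ^ ((1 : ℝ) / (4 * k + 1)))).card : ℝ) →
            ∃ b₀ : ℕ, b₀ < primor (Real.log N / 3) ∧
              Int.gcd (F b₀) (primor (Real.log N / 3)) = 1 ∧
              c * δ * (Real.log (Real.log N)) ^ k / (Real.log N) ^ k *
                  (N : ℝ) / (primor (Real.log N / 3) : ℝ)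
                ≤ ((A.filter (fun n => n % primor (Real.log N / 3) = b₀)).card : ℝ) := by
  obtain ⟨c1, hc1, hlow⟩ := lower_bd hk hF hadm
  obtain ⟨C, hC, hup⟩ := good_bd hF hdisc
  have he0 : (0 : ℝ) < (1 : ℝ) / (4 * k + 1) := by positivity
  have ev2 : ∀ᶠ N : ℕ in Filter.atTop, 3 * C + 9 ≤ Real.log N :=
    (Real.tendsto_log_atTop.comp tendsto_natCast_atTop_atTop).eventually_ge_atTop _
  obtain ⟨N₀, hN₀⟩ := Filter.eventually_atTop.1 (hlow.and (ev2.and (log_pow_ev 1 he0 one_pos)))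
  refine ⟨c1 / (C * 2 ^ k), N₀, by positivity, ?_⟩
  intro N hN A hA δ hδ hcard
  obtain ⟨h1, h2, h3⟩ := hN₀ N hN
  rw [pow_one, one_mul] at h3
  have hl9 : 9 ≤ Real.log N := by linarith
  have hN0 : (0 : ℝ) < N := by
    rcases Nat.eq_zero_or_pos N with h | h
    · rw [h] at hl9
      norm_num at hl9
    · exact_mod_cast h
  set l := Real.log N with hl
  set z := l / 3 with hz
  have hG := hup z (by rw [hz]; linarith)
  set M := primor z with hM
  have hM0 : 0 < M := primor_pos z
  have hMr : (0 : ℝ) < M := by exact_mod_cast hM0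
  set G := (Finset.range M).filter (fun m : ℕ => Int.gcd (F m) M = 1) with hGd
  have hll : 0 < Real.log l := Real.log_pos (by linarith)
  have hlz : Real.log l / 2 ≤ Real.log z := by
    have : Real.log l ≤ 2 * Real.log z := by
      have e2 : 2 * Real.log z = Real.log (z ^ 2) := by
        rw [Real.log_pow]
        norm_num
      rw [e2]
      apply Real.log_le_log (by linarith)
      rw [hz]
      nlinarith
    linarith
  have hG2 : (G.card : ℝ) ≤ C * 2 ^ k * M / Real.log l ^ k := by
    refine hG.trans ?_
    calc C * M / Real.log z ^ k ≤ C * M / (Real.log l / 2) ^ k := by gcongr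
      _ = _ := by
        rw [div_pow]
        field_simp
  have hmap : ∀ n ∈ A, n % M ∈ G := by
    intro n hn
    have hn2 := (Finset.mem_filter.1 (hA hn)).2
    rw [gcd_primor] at hn2
    rw [hGd, Finset.mem_filter, Finset.mem_range]
    refine ⟨Nat.mod_lt _ hM0, ?_⟩
    rw [hM, gcd_primor, ← hM]
    intro p hp
    have hp' := Finset.mem_filter.1 hp
    have hpM : (p : ℤ) ∣ M := by
      rw [hM]
      unfold primor
      exact_mod_cast Finset.dvd_prod_of_mem (fun p : ℕ => p) hp
    rw [← Fdvd_iff hF (hpM.trans (natmod_dvd M n))]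
    apply hn2
    refine Finset.mem_filter.2 ⟨Finset.mem_range.2 ?_, hp'.2⟩
    have hq := Finset.mem_range.1 hp'.1
    have : ⌊z⌋₊ ≤ ⌊(N : ℝ) ^ ((1 : ℝ) / (4 * k + 1))⌋₊ := by
      apply Nat.floor_le_floor
      rw [hz]
      linarith
    omega
  have hsum := Finset.card_eq_sum_card_fiberwise (f := fun n => n % M) (s := A) (t := G) hmap
  have hlow2 : δ * (c1 * N / l ^ k) ≤ A.card := by
    rw [hcard]
    gcongr
  have hl0 : 0 < l := by linarith
  have hpos : 0 < δ * (c1 * N / l ^ k) := by positivity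
  by_contra hcon
  push Not at hcon
  set T := c1 / (C * 2 ^ k) * δ * Real.log l ^ k / l ^ k * N / M with hT
  have hlt : ∀ b₀ ∈ G, ((A.filter (fun n => n % M = b₀)).card : ℝ) < T := by
    intro b₀ hb
    have hb' := Finset.mem_filter.1 hb
    exact hcon b₀ (Finset.mem_range.1 hb'.1) hb'.2
  have hGne : G.Nonempty := by
    rw [Finset.nonempty_iff_ne_empty]
    intro h
    rw [h] at hsum
    simp only [Finset.sum_empty] at hsum
    rw [hsum] at hlow2
    norm_num at hlow2
    linarith
  have h5 : (A.card : ℝ) < G.card * T := by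
    rw [hsum]
    push_cast
    calc _ < ∑ _b ∈ G, T := Finset.sum_lt_sum_of_nonempty hGne hlt
      _ = _ := by simp
  have hT0 : 0 ≤ T := by positivity
  have h6 : (G.card : ℝ) * T ≤ C * 2 ^ k * M / Real.log l ^ k * T := by gcongr
  have h7 : C * 2 ^ k * M / Real.log l ^ k * T = δ * (c1 * N / l ^ k) := by
    rw [hT]
    field_simp
  linarith
end

section
/- Let m ≥ 1 be an integer and let c_1 > 0 and 0 < c < 1 be real numbers. There exists a constant c_2 > 0 depending only on m, c_1 and c such that for every natural number N' ≥ 16 and every polynomial G(X) = ∏_{i=1}^m (e_i X + d_i) with integers e_i, d_i satisfying |e_i| + |d_i| ≤ c_1·N'^{100} and Δ(G) = ∏_{i=1}^m e_i · ∏_{i≠j}(e_i d_j − e_j d_i) ≠ 0, one has |{n ∈ ℕ : n ≤ N' and gcd(G(n), ∏_{p ≤ N'^c, p prime} p) = 1}| ≤ c_2 · N' · (log log N')^m / (log N')^m. -/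
open Finset

lemma per_sum (g : ℕ → ℝ) (M : ℕ) (hg : ∀ n, g (n + M) = g n) (q r : ℕ) :
    ∑ n ∈ range (M * q + r), g n = q * ∑ n ∈ range M, g n + ∑ n ∈ range r, g n := by
  have h1 : ∀ q n, g (M * q + n) = g n := by
    intro q
    induction q with
    | zero => simp
    | succ q ih =>
      intro n
      rw [show M * (q + 1) + n = (M * q + n) + M by ring, hg, ih]
  induction q with
  | zero => simp
  | succ q ih =>
    rw [show M * (q + 1) + r = M + (M * q + r) by ring, sum_range_add]
    have : ∀ x, g (M + x) = g x := fun x => by rw [add_comm, hg]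
    simp only [this, ih]
    push_cast; ring

lemma per_mod (g : ℕ → ℝ) (M : ℕ) (hg : ∀ n, g (n + M) = g n) (n : ℕ) : g (n % M) = g n := by
  exact (show Function.Periodic g M from hg).map_mod_nat n

lemma crt_sum (f g : ℕ → ℝ) (a b : ℕ) (ha : 0 < a) (hb : 0 < b) (hab : a.Coprime b)
    (hf : ∀ n, f (n + a) = f n) (hg : ∀ n, g (n + b) = g n) :
    ∑ n ∈ range (a * b), f n * g n = (∑ n ∈ range a, f n) * ∑ n ∈ range b, g n := by
  rw [sum_mul_sum, ← sum_product']
  refine sum_bij' (fun n _ => (n % a, n % b)) (fun x _ => (Nat.chineseRemainder hab x.1 x.2 : ℕ))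
    ?_ ?_ ?_ ?_ ?_
  · intro n hn
    simp [Nat.mod_lt, ha, hb]
  · intro x hx
    simp only [mem_range]
    exact Nat.chineseRemainder_lt_mul hab _ _ ha.ne' hb.ne'
  · intro n hn
    simp only [mem_range] at hn
    have h1 : n ≡ (Nat.chineseRemainder hab (n % a) (n % b) : ℕ) [MOD a * b] :=
      Nat.chineseRemainder_modEq_unique hab (Nat.mod_modEq _ _).symm (Nat.mod_modEq _ _).symm
    exact (Nat.ModEq.eq_of_lt_of_lt h1 hn
      (Nat.chineseRemainder_lt_mul hab _ _ ha.ne' hb.ne')).symm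
  · intro x hx
    simp only [mem_product, mem_range] at hx
    have := (Nat.chineseRemainder hab x.1 x.2).2
    ext
    · exact Nat.mod_eq_of_modEq this.1 hx.1
    · exact Nat.mod_eq_of_modEq this.2 hx.2
  · intro n hn
    simp only [per_mod f a hf, per_mod g b hg]

lemma crt_prod (U : Finset ℕ) (hU : ∀ p ∈ U, p.Prime) (g : ℕ → ℕ → ℝ)
    (hg : ∀ p ∈ U, ∀ n, g p (n + p) = g p n) :
    (∀ n, ∏ p ∈ U, g p (n + ∏ p ∈ U, p) = ∏ p ∈ U, g p n) ∧
    ∑ n ∈ range (∏ p ∈ U, p), ∏ p ∈ U, g p n = ∏ p ∈ U, ∑ n ∈ range p, g p n := by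
  constructor
  · intro n
    refine prod_congr rfl fun p hp => ?_
    obtain ⟨k, hk⟩ := dvd_prod_of_mem (fun p : ℕ => p) hp
    have : Function.Periodic (g p) p := hg p hp
    have := this.nat_mul k
    rw [hk, mul_comm]
    exact_mod_cast this n
  · induction U using Finset.induction_on with
    | empty => simp
    | insert a s has ih =>
      have hs : ∀ p ∈ s, p.Prime := fun p hp => hU p (mem_insert_of_mem hp)
      have hgs : ∀ p ∈ s, ∀ n, g p (n + p) = g p n := fun p hp => hg p (mem_insert_of_mem hp)
      simp only [prod_insert has]
      rw [crt_sum, ih hs hgs]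
      · exact (hU a (mem_insert_self _ _)).pos
      · exact prod_pos fun p hp => (hs p hp).pos
      · refine Nat.Coprime.prod_right fun p hp => ?_
        exact (Nat.coprime_primes (hU a (mem_insert_self _ _)) (hs p hp)).2
          (fun h => has (h ▸ hp))
      · exact hg a (mem_insert_self _ _)
      · intro n
        refine prod_congr rfl fun p hp => ?_
        obtain ⟨k, hk⟩ := dvd_prod_of_mem (fun p : ℕ => p) hp
        have : Function.Periodic (g p) p := hgs p hp
        have := this.nat_mul k
        rw [hk, mul_comm]
        exact_mod_cast this n

/-- Markov-type inequality. -/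
lemma markov (P : Finset ℕ) (h l : ℕ → ℝ) (hh : ∀ p ∈ P, 0 ≤ h p) (hl : ∀ p ∈ P, 0 ≤ l p)
    (K : ℝ) (hK : 0 < K) (hs : ∑ p ∈ P, h p / (1 + h p) * l p ≤ K / 2) :
    ∏ p ∈ P, (1 + h p) ≤ 2 * ∑ T ∈ P.powerset with ∑ p ∈ T, l p ≤ K, ∏ p ∈ T, h p := by
  have e1 : ∑ T ∈ P.powerset, (∏ p ∈ T, h p) * ∑ p ∈ T, l p =
      (∏ p ∈ P, (1 + h p)) * ∑ p ∈ P, h p / (1 + h p) * l p := by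
    clear hs hl
    induction P using Finset.induction_on with
    | empty => simp
    | insert a s has ih =>
      have ih := ih (fun p hp => hh p (mem_insert_of_mem hp))
      have ha := hh a (mem_insert_self _ _)
      rw [sum_powerset_insert has, ih, prod_insert has, sum_insert has]
      have : ∀ T ∈ s.powerset, (∏ p ∈ insert a T, h p) * ∑ p ∈ insert a T, l p =
          h a * l a * (∏ p ∈ T, h p) + h a * ((∏ p ∈ T, h p) * ∑ p ∈ T, l p) := by
        intro T hT
        have : a ∉ T := fun h => has (mem_powerset.1 hT h)
        rw [prod_insert this, sum_insert this]; ring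
      rw [sum_congr rfl this, sum_add_distrib, ← mul_sum, ← mul_sum, ih, ← prod_one_add]
      field_simp
      ring
  have e2 : ∏ p ∈ P, (1 + h p) = ∑ T ∈ P.powerset with ∑ p ∈ T, l p ≤ K, ∏ p ∈ T, h p +
      ∑ T ∈ P.powerset with ¬ ∑ p ∈ T, l p ≤ K, ∏ p ∈ T, h p := by
    rw [sum_filter_add_sum_filter_not, prod_one_add]
  have nn : ∀ T ∈ P.powerset, 0 ≤ ∏ p ∈ T, h p := fun T hT =>
    prod_nonneg fun p hp => hh p (mem_powerset.1 hT hp)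
  have nl : ∀ T ∈ P.powerset, 0 ≤ ∑ p ∈ T, l p := fun T hT =>
    sum_nonneg fun p hp => hl p (mem_powerset.1 hT hp)
  have e3 : K * ∑ T ∈ P.powerset with ¬ ∑ p ∈ T, l p ≤ K, ∏ p ∈ T, h p ≤
      (∏ p ∈ P, (1 + h p)) * (K / 2) := by
    calc _ ≤ ∑ T ∈ P.powerset with ¬ ∑ p ∈ T, l p ≤ K, (∏ p ∈ T, h p) * ∑ p ∈ T, l p := by
          rw [mul_sum]
          refine sum_le_sum fun T hT => ?_
          rw [mem_filter, not_le] at hT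
          rw [mul_comm]
          exact mul_le_mul_of_nonneg_left hT.2.le (nn T hT.1)
      _ ≤ ∑ T ∈ P.powerset, (∏ p ∈ T, h p) * ∑ p ∈ T, l p :=
          sum_le_sum_of_subset_of_nonneg (filter_subset _ _)
            fun T hT _ => mul_nonneg (nn T hT) (nl T hT)
      _ ≤ _ := by
          rw [e1]
          exact mul_le_mul_of_nonneg_left hs (prod_nonneg fun p hp => by linarith [hh p hp])
  have e4 : ∑ T ∈ P.powerset with ¬ ∑ p ∈ T, l p ≤ K, ∏ p ∈ T, h p ≤
      (∏ p ∈ P, (1 + h p)) / 2 := by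
    have : K * ∑ T ∈ P.powerset with ¬ ∑ p ∈ T, l p ≤ K, ∏ p ∈ T, h p ≤
      K * ((∏ p ∈ P, (1 + h p)) / 2) := by linarith
    exact le_of_mul_le_mul_left this hK
  linarith

lemma primes_card (P : Finset ℕ) (hP : ∀ p ∈ P, p.Prime) (Q : ℝ)
    (F : Finset (Finset ℕ)) (hF : F ⊆ P.powerset) (hQ : ∀ T ∈ F, ((∏ p ∈ T, p : ℕ) : ℝ) ≤ Q)
    (g : ℕ → ℝ) (hg : ∀ n, 0 ≤ g n) :
    ∑ T ∈ F, g (∏ p ∈ T, p) ≤ ∑ n ∈ Icc 1 ⌊Q⌋₊, g n := by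
  have hpr : ∀ T ∈ F, ∀ p ∈ T, p.Prime := fun T hT p hp => hP p (mem_powerset.1 (hF hT) hp)
  have inj : Set.InjOn (fun T : Finset ℕ => ∏ p ∈ T, p) F := by
    intro T hT T' hT' h
    simp only at h
    rw [← Nat.primeFactors_prod (hpr T hT), h, Nat.primeFactors_prod (hpr T' hT')]
  rw [← sum_image (f := g) (g := fun T : Finset ℕ => ∏ p ∈ T, p) inj]
  refine sum_le_sum_of_subset_of_nonneg ?_ (fun n _ _ => hg n)
  intro n hn
  obtain ⟨T, hT, rfl⟩ := mem_image.1 hn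
  rw [mem_Icc]
  exact ⟨Nat.one_le_iff_ne_zero.2 (prod_ne_zero_iff.2 fun p hp => (hpr T hT p hp).ne_zero),
    Nat.le_floor (hQ T hT)⟩

lemma sieve (P : Finset ℕ) (hP : ∀ p ∈ P, p.Prime) (f : ℕ → ℕ → ℝ) (h : ℕ → ℝ)
    (hper : ∀ p ∈ P, ∀ n, f p (n + p) = f p n)
    (hh : ∀ p ∈ P, 0 < h p)
    (h0 : ∀ p ∈ P, ∑ n ∈ range p, f p n = 0)
    (h2 : ∀ p ∈ P, ∑ n ∈ range p, f p n ^ 2 = p / h p)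
    (hb : ∀ p ∈ P, ∀ n, |h p * f p n| ≤ 1)
    (N : ℕ) (X : Finset ℕ) (hX : X ⊆ range N) (hX1 : ∀ n ∈ X, ∀ p ∈ P, f p n = 1)
    (Q : ℝ) (hQ1 : 1 ≤ Q)
    (F : Finset (Finset ℕ)) (hF : F ⊆ P.powerset) (hF0 : ∅ ∈ F)
    (hQ : ∀ T ∈ F, ((∏ p ∈ T, p : ℕ) : ℝ) ≤ Q) :
    (X.card : ℝ) * ∑ T ∈ F, ∏ p ∈ T, h p ≤ N + Q + Q ^ 4 := by
  classical
  set S := ∑ T ∈ F, ∏ p ∈ T, h p with hS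
  have hTP : ∀ T ∈ F, ∀ p ∈ T, p ∈ P := fun T hT p hp => mem_powerset.1 (hF hT) hp
  have hpos : ∀ T ∈ F, 0 < ∏ p ∈ T, h p := fun T hT => prod_pos fun p hp => hh p (hTP T hT p hp)
  have hS1 : 1 ≤ S := by
    have := single_le_sum (f := fun T => ∏ p ∈ T, h p) (fun T hT => (hpos T hT).le) hF0
    simpa using this
  let φ : Finset ℕ → ℕ → ℝ := fun T n => ∏ p ∈ T, (h p * f p n)
  have hφ1 : ∀ T ∈ F, ∀ n, |φ T n| ≤ 1 := by
    intro T hT n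
    simp only [φ]
    rw [abs_prod]
    exact prod_le_one (fun _ _ => abs_nonneg _) fun p hp => hb p (hTP T hT p hp) n
  have hcard : (F.card : ℝ) ≤ Q := by
    have := primes_card P hP Q F hF hQ (fun _ => 1) (fun _ => zero_le_one)
    simp only [sum_const, nsmul_eq_mul, mul_one, Nat.card_Icc, add_tsub_cancel_right] at this
    exact this.trans (Nat.floor_le (by linarith))
  -- lower bound
  have lower : (X.card : ℝ) * S ^ 2 ≤ ∑ n ∈ range N, (∑ T ∈ F, φ T n) ^ 2 := by
    calc (X.card : ℝ) * S ^ 2 = ∑ n ∈ X, (∑ T ∈ F, φ T n) ^ 2 := by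
          rw [← nsmul_eq_mul, ← sum_const]
          refine sum_congr rfl fun n hn => ?_
          congr 1
          refine sum_congr rfl fun T hT => prod_congr rfl fun p hp => ?_
          rw [hX1 n hn p (hTP T hT p hp), mul_one]
      _ ≤ _ := sum_le_sum_of_subset_of_nonneg hX fun _ _ _ => sq_nonneg _
  have expand : ∑ n ∈ range N, (∑ T ∈ F, φ T n) ^ 2 =
      ∑ T ∈ F, ∑ T' ∈ F, ∑ n ∈ range N, φ T n * φ T' n := by
    simp only [sq, sum_mul_sum]
    rw [sum_comm]
    refine sum_congr rfl fun T _ => ?_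
    rw [sum_comm]
  have prodpos : ∀ T ∈ F, 0 < ∏ p ∈ T, p := fun T hT =>
    prod_pos fun p hp => (hP p (hTP T hT p hp)).pos
  have diag : ∀ T ∈ F, ∑ n ∈ range N, φ T n * φ T n ≤ (N + Q) * ∏ p ∈ T, h p := by
    intro T hT
    obtain ⟨c1, c2⟩ := crt_prod T (fun p hp => hP p (hTP T hT p hp))
      (fun p n => (h p * f p n) ^ 2) (fun p hp n => by rw [hper p (hTP T hT p hp)])
    set M := ∏ p ∈ T, p with hM
    have hsq : ∀ n, φ T n * φ T n = ∏ p ∈ T, (h p * f p n) ^ 2 := by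
      intro n; rw [prod_pow, sq]
    simp only [hsq]
    have c3 : ∏ p ∈ T, ∑ n ∈ range p, (h p * f p n) ^ 2 = M * ∏ p ∈ T, h p := by
      rw [hM, Nat.cast_prod, ← prod_mul_distrib]
      refine prod_congr rfl fun p hp => ?_
      simp only [mul_pow]
      rw [← mul_sum, h2 p (hTP T hT p hp)]
      have := (hh p (hTP T hT p hp)).ne'
      field_simp
    have hle : N ≤ M * (N / M + 1) + 0 := by
      have := Nat.lt_mul_div_succ N (prodpos T hT)
      rw [← hM] at this; omega
    calc _ ≤ ∑ n ∈ range (M * (N / M + 1) + 0), ∏ p ∈ T, (h p * f p n) ^ 2 :=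
          sum_le_sum_of_subset_of_nonneg (range_subset_range.2 hle)
            fun _ _ _ => prod_nonneg fun _ _ => sq_nonneg _
      _ = ((N / M + 1 : ℕ) : ℝ) * (M * ∏ p ∈ T, h p) := by
          rw [per_sum _ M c1, c2, c3]; simp
      _ = ((M * (N / M) + M : ℕ) : ℝ) * ∏ p ∈ T, h p := by push_cast; ring
      _ ≤ _ := by
          refine mul_le_mul_of_nonneg_right ?_ (hpos T hT).le
          push_cast
          have := Nat.mul_div_le N M
          have : ((M * (N / M) : ℕ) : ℝ) ≤ N := by exact_mod_cast this
          push_cast at this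
          have := hQ T hT
          linarith
  have off : ∀ T ∈ F, ∀ T' ∈ F, T ≠ T' → ∑ n ∈ range N, φ T n * φ T' n ≤ Q ^ 2 := by
    intro T hT T' hT' hne
    let U := T ∪ T'
    have hUP : ∀ p ∈ U, p ∈ P := fun p hp => by
      rcases mem_union.1 hp with h | h
      · exact hTP T hT p h
      · exact hTP T' hT' p h
    let g : ℕ → ℕ → ℝ := fun p n =>
      (if p ∈ T then h p * f p n else 1) * (if p ∈ T' then h p * f p n else 1)
    obtain ⟨c1, c2⟩ := crt_prod U (fun p hp => hP p (hUP p hp)) g (fun p hp n => by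
      simp only [g]; rw [hper p (hUP p hp)])
    have hg : ∀ n, φ T n * φ T' n = ∏ p ∈ U, g p n := by
      intro n
      simp only [g, U, φ]
      rw [prod_mul_distrib (s := T ∪ T'), prod_ite_mem, prod_ite_mem, union_inter_cancel_left,
        union_inter_cancel_right]
    have hz : ∏ p ∈ U, ∑ n ∈ range p, g p n = 0 := by
      obtain ⟨p, hp⟩ : ∃ p, ¬ (p ∈ T ↔ p ∈ T') := by
        by_contra! hcon
        exact hne (Finset.ext hcon)
      have hpU : p ∈ U := mem_union.2 (by tauto)
      refine prod_eq_zero hpU ?_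
      have : ∀ n, g p n = h p * f p n := by
        intro n
        simp only [g]
        by_cases h1 : p ∈ T <;> by_cases h2 : p ∈ T' <;> simp_all
      simp only [this]
      rw [← mul_sum, h0 p (hUP p hpU), mul_zero]
    set M := ∏ p ∈ U, p with hM
    have hM0 : 0 < M := prod_pos fun p hp => (hP p (hUP p hp)).pos
    have hMle : M ≤ (∏ p ∈ T, p) * ∏ p ∈ T', p := by
      rw [← prod_union_inter]
      exact Nat.le_mul_of_pos_right _ (prod_pos fun p hp =>
        (hP p (hTP T hT p (mem_inter.1 hp).1)).pos)
    simp only [hg]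
    conv_lhs => rw [← Nat.div_add_mod N M]
    rw [per_sum _ M c1, c2, hz, mul_zero, zero_add]
    calc _ ≤ ∑ n ∈ range (N % M), (1 : ℝ) := by
          refine sum_le_sum fun n _ => ?_
          rw [← hg]
          refine (le_abs_self _).trans ?_
          rw [abs_mul]
          exact mul_le_one₀ (hφ1 T hT n) (abs_nonneg _) (hφ1 T' hT' n)
      _ ≤ (M : ℝ) := by
          simp only [sum_const, card_range, nsmul_eq_mul, mul_one]
          exact_mod_cast (Nat.mod_lt N hM0).le
      _ ≤ ((∏ p ∈ T, p : ℕ) : ℝ) * ((∏ p ∈ T', p : ℕ) : ℝ) := by exact_mod_cast hMle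
      _ ≤ Q * Q := mul_le_mul (hQ T hT) (hQ T' hT') (Nat.cast_nonneg _) (by linarith)
      _ = Q ^ 2 := by ring
  have upper : ∑ T ∈ F, ∑ T' ∈ F, ∑ n ∈ range N, φ T n * φ T' n ≤ (N + Q) * S + Q ^ 4 := by
    calc _ ≤ ∑ T ∈ F, ∑ T' ∈ F, ((if T = T' then (N + Q) * ∏ p ∈ T, h p else 0) + Q ^ 2) := by
          refine sum_le_sum fun T hT => sum_le_sum fun T' hT' => ?_
          split_ifs with he
          · subst he
            have := diag T hT
            nlinarith
          · rw [zero_add]; exact off T hT T' hT' he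
      _ = (N + Q) * S + F.card * (F.card * Q ^ 2) := by
          simp only [sum_add_distrib, sum_ite_eq, sum_const, nsmul_eq_mul]
          rw [hS, mul_sum]
          congr 1
          exact sum_congr rfl fun T hT => by simp [hT]
      _ ≤ (N + Q) * S + Q * (Q * Q ^ 2) := by gcongr
      _ = _ := by ring
  have key : (X.card : ℝ) * S * S ≤ (N + Q + Q ^ 4) * S := by
    have : Q ^ 4 ≤ Q ^ 4 * S := le_mul_of_one_le_right (by positivity) hS1
    nlinarith
  exact le_of_mul_le_mul_right key (by linarith)

lemma mertens1 (n : ℕ) (P : Finset ℕ) (hP : ∀ p ∈ P, p.Prime ∧ p ≤ n) :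
    ∑ p ∈ P, Real.log p / p ≤ 2 * Real.log n := by
  rcases Nat.eq_zero_or_pos n with rfl | hn
  · have : P = ∅ := by
      refine eq_empty_of_forall_notMem fun p hp => ?_
      have := (hP p hp).1.pos
      have := (hP p hp).2
      omega
    simp [this]
  have hdvd : ∏ p ∈ P, p ^ (n / p) ∣ n.factorial := by
    refine prod_dvd_of_isRelPrime ?_ ?_
    · intro p hp q hq hpq
      exact (Nat.coprime_iff_isRelPrime.1 (Nat.Coprime.pow _ _ ((Nat.coprime_primes (hP p hp).1 (hP q hq).1).2 hpq)))
    · intro p hp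
      have h1 := Nat.prod_factorial_dvd_factorial_sum (range (n / p)) (fun _ => p)
      simp only [prod_const, card_range, sum_const, smul_eq_mul] at h1
      refine (pow_dvd_pow_of_dvd (Nat.dvd_factorial (hP p hp).1.pos le_rfl) _).trans
        (h1.trans (Nat.factorial_dvd_factorial (Nat.div_mul_le_self n p)))
  have hle : ∏ p ∈ P, p ^ (n / p) ≤ n ^ n :=
    (Nat.le_of_dvd (Nat.factorial_pos n) hdvd).trans (Nat.factorial_le_pow n)
  have hlog : ∑ p ∈ P, ((n / p : ℕ) : ℝ) * Real.log p ≤ n * Real.log n := by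
    have h1 : Real.log ((∏ p ∈ P, p ^ (n / p) : ℕ) : ℝ) ≤ Real.log ((n ^ n : ℕ) : ℝ) := by
      refine Real.log_le_log ?_ (by exact_mod_cast hle)
      exact_mod_cast prod_pos fun p hp => pow_pos (hP p hp).1.pos _
    push_cast at h1
    rw [Real.log_prod (fun p hp => by
      have := (hP p hp).1.pos
      positivity)] at h1
    simpa [Real.log_pow] using h1
  have hterm : ∀ p ∈ P, (n : ℝ) * (Real.log p / p) ≤ 2 * (((n / p : ℕ) : ℝ) * Real.log p) := by
    intro p hp
    obtain ⟨hpp, hpn⟩ := hP p hp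
    have hp0 : (0 : ℝ) < p := by exact_mod_cast hpp.pos
    have h1 : n ≤ 2 * (n / p) * p := by
      have h2 := Nat.lt_mul_div_succ n hpp.pos
      have h3 : 1 ≤ n / p := Nat.div_pos hpn hpp.pos
      nlinarith
    have h1' : (n : ℝ) / p ≤ 2 * ((n / p : ℕ) : ℝ) := by
      rw [div_le_iff₀ hp0]; exact_mod_cast h1
    have hl : 0 ≤ Real.log p := Real.log_natCast_nonneg p
    calc (n : ℝ) * (Real.log p / p) = n / p * Real.log p := by ring
      _ ≤ _ := by nlinarith
  have hn' : (0 : ℝ) < n := by exact_mod_cast hn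
  have : (n : ℝ) * ∑ p ∈ P, Real.log p / p ≤ n * (2 * Real.log n) := by
    rw [mul_sum]
    refine (sum_le_sum hterm).trans ?_
    rw [← mul_sum]; linarith
  exact le_of_mul_le_mul_left this hn'

lemma log_prod_nat (T : Finset ℕ) (hT : ∀ p ∈ T, p.Prime) :
    Real.log ((∏ p ∈ T, p : ℕ) : ℝ) = ∑ p ∈ T, Real.log p := by
  push_cast
  exact Real.log_prod fun p hp => by exact_mod_cast (hT p hp).ne_zero

lemma mertens_upper (n : ℕ) (hn : 2 ≤ n) (P : Finset ℕ) (hP : ∀ p ∈ P, p.Prime ∧ p ≤ n) :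
    ∏ p ∈ P, (1 + 1 / (p : ℝ)) ≤ 2 * (1 + 4 * Real.log n) := by
  have hl : 0 < Real.log n := Real.log_pos (by exact_mod_cast hn)
  have h1 := markov P (fun p => 1 / (p : ℝ)) (fun p => Real.log p) (fun p _ => by positivity)
    (fun p _ => Real.log_natCast_nonneg p) (4 * Real.log n) (by linarith) (by
      refine le_trans (sum_le_sum fun p hp => ?_) ((mertens1 n P hP).trans (by linarith))
      have hp0 : (0 : ℝ) < p := by exact_mod_cast (hP p hp).1.pos
      have hlp : 0 ≤ Real.log p := Real.log_natCast_nonneg p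
      rw [div_eq_mul_one_div (Real.log p), mul_comm]
      refine mul_le_mul_of_nonneg_left ?_ hlp
      exact div_le_self (by positivity) (by linarith [show 0 < 1 / (p : ℝ) by positivity]))
  refine h1.trans (mul_le_mul_of_nonneg_left ?_ zero_le_two)
  have h2 := primes_card P (fun p hp => (hP p hp).1) ((n ^ 4 : ℕ) : ℝ)
    (P.powerset.filter fun T => ∑ p ∈ T, Real.log p ≤ 4 * Real.log n) (filter_subset _ _) (by
      intro T hT
      rw [mem_filter, mem_powerset] at hT
      have hpr : ∀ p ∈ T, p.Prime := fun p hp => (hP p (hT.1 hp)).1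
      have h3 := hT.2
      rw [← log_prod_nat T hpr] at h3
      rw [← Real.log_le_log_iff]
      · push_cast at h3 ⊢
        rw [Real.log_pow]; exact_mod_cast h3
      · exact_mod_cast prod_pos fun p hp => (hpr p hp).pos
      · exact_mod_cast pow_pos (by omega) _) (fun n => (n : ℝ)⁻¹) (fun n => by positivity)
  rw [Nat.floor_natCast] at h2
  have h4 := harmonic_le_one_add_log (n ^ 4)
  rw [harmonic_eq_sum_Icc] at h4
  push_cast at h4 h2
  rw [Real.log_pow] at h4
  push_cast at h4
  simp only [one_div, prod_inv_distrib]
  exact h2.trans h4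

lemma mertens_lower (n : ℕ) :
    Real.log (n + 1) ≤ 2 * ∏ p ∈ (range (n + 1)).filter Nat.Prime, (1 + 1 / (p : ℝ)) := by
  have h1 := log_add_one_le_harmonic n
  rw [harmonic_eq_sum_Icc] at h1
  push_cast at h1
  refine h1.trans ?_
  set P := (range (n + 1)).filter Nat.Prime
  have hb : ∑ b ∈ Icc 1 n, ((b : ℝ) ^ 2)⁻¹ ≤ 2 := by
    have := sum_Ioo_inv_sq_le (α := ℝ) 0 (n + 1)
    have e : Ioo 0 (n + 1) = Icc 1 n := by ext; simp; omega
    rw [e] at this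
    simpa using this
  have h2 : ∏ p ∈ P, (1 + 1 / (p : ℝ)) = ∑ T ∈ P.powerset, ∏ p ∈ T, 1 / (p : ℝ) := prod_one_add _
  have hnn : ∀ T ∈ P.powerset, 0 ≤ ∏ p ∈ T, 1 / (p : ℝ) :=
    fun T _ => prod_nonneg fun p _ => by positivity
  calc ∑ i ∈ Icc 1 n, ((i : ℝ))⁻¹
      ≤ ∑ i ∈ (Icc 1 n ×ˢ P.powerset).image (fun x : ℕ × Finset ℕ => (x.1 ^ 2 * ∏ p ∈ x.2, p : ℕ)), ((i : ℕ) : ℝ)⁻¹ := by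
        refine sum_le_sum_of_subset_of_nonneg ?_ (fun _ _ _ => by positivity)
        intro k hk
        rw [mem_Icc] at hk
        obtain ⟨a, b, hab, hsq⟩ := Nat.sq_mul_squarefree k
        rw [mem_image]
        have ha0 : a ≠ 0 := by rintro rfl; simp at hab; omega
        have hb0 : b ≠ 0 := by rintro rfl; simp at hab; omega
        refine ⟨(b, a.primeFactors), ?_, ?_⟩
        · rw [mem_product, mem_Icc, mem_powerset]
          refine ⟨⟨by simp only; omega, ?_⟩, ?_⟩
          · simp only
            calc b ≤ b ^ 2 := Nat.le_self_pow two_ne_zero b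
              _ ≤ b ^ 2 * a := Nat.le_mul_of_pos_right _ (by omega)
              _ ≤ n := by omega
          · intro p hp
            have hpa := Nat.le_of_mem_primeFactors hp
            have : a ≤ b ^ 2 * a := Nat.le_mul_of_pos_left _ (by positivity)
            simp only [P, mem_filter, mem_range]
            exact ⟨by omega, Nat.prime_of_mem_primeFactors hp⟩
        · simp only
          rw [Nat.prod_primeFactors_of_squarefree hsq, hab]
    _ ≤ ∑ x ∈ Icc 1 n ×ˢ P.powerset, (((x.1 ^ 2 * ∏ p ∈ x.2, p : ℕ) : ℝ))⁻¹ := by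
        exact sum_image_le_of_nonneg (fun _ _ => by positivity)
    _ = (∑ b ∈ Icc 1 n, ((b : ℝ) ^ 2)⁻¹) * ∑ T ∈ P.powerset, ∏ p ∈ T, 1 / (p : ℝ) := by
        rw [sum_mul_sum, sum_product]
        refine sum_congr rfl fun b _ => sum_congr rfl fun T _ => ?_
        push_cast
        rw [mul_inv]
        simp
    _ ≤ _ := by
        rw [h2]
        exact mul_le_mul_of_nonneg_right hb (sum_nonneg hnn)
lemma root_count (m : ℕ) (e d : Fin m → ℤ) (p : ℕ) (hp : p.Prime)
    (hΔ : ¬ (p : ℤ) ∣ (∏ i, e i) * ∏ i, ∏ j ∈ Finset.univ.filter (fun j => j ≠ i),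
              (e i * d j - e j * d i)) :
    ((range p).filter (fun n : ℕ => (p : ℤ) ∣ ∏ i, (e i * (n : ℤ) + d i))).card = m := by
  have : Fact p.Prime := ⟨hp⟩
  rw [← ZMod.intCast_zmod_eq_zero_iff_dvd] at hΔ
  push_cast at hΔ
  obtain ⟨h1, h2⟩ := mul_ne_zero_iff.1 hΔ
  have he : ∀ i, (e i : ZMod p) ≠ 0 := fun i => prod_ne_zero_iff.1 h1 i (mem_univ i)
  have hij : ∀ i j, j ≠ i → (e i * d j - e j * d i : ZMod p) ≠ 0 := fun i j hj =>
    prod_ne_zero_iff.1 (prod_ne_zero_iff.1 h2 i (mem_univ i)) j (by simp [hj])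
  have heq : (range p).filter (fun n : ℕ => (p : ℤ) ∣ ∏ i, (e i * (n : ℤ) + d i)) =
      univ.image (fun i => (-(d i : ZMod p) / e i).val) := by
    ext n
    simp only [mem_filter, mem_range, mem_image, mem_univ, true_and]
    rw [← ZMod.intCast_zmod_eq_zero_iff_dvd]
    push_cast
    rw [prod_eq_zero_iff]
    constructor
    · rintro ⟨hn, i, -, hi⟩
      refine ⟨i, ?_⟩
      have : (-(d i : ZMod p) / e i) = (n : ZMod p) := by
        rw [div_eq_iff (he i)]
        linear_combination -hi
      rw [this, ZMod.val_natCast_of_lt hn]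
    · rintro ⟨i, rfl⟩
      refine ⟨ZMod.val_lt _, i, mem_univ i, ?_⟩
      rw [ZMod.natCast_zmod_val]
      have := he i
      field_simp
      ring
  rw [heq, card_image_of_injective, card_univ, Fintype.card_fin]
  intro i j h
  have h3 := ZMod.val_injective p h
  rw [div_eq_div_iff (he i) (he j)] at h3
  by_contra hne
  refine hij i j (fun h => hne h.symm) ?_
  linear_combination h3

lemma disc_bound (m : ℕ) (e d : Fin m → ℤ) (B : ℝ) (hB : 1 ≤ B)
    (h : ∀ i, |(e i : ℝ)| + |(d i : ℝ)| ≤ B) :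
    |(((∏ i, e i) * ∏ i, ∏ j ∈ Finset.univ.filter (fun j => j ≠ i),
              (e i * d j - e j * d i) : ℤ) : ℝ)| ≤ B ^ (m + 2 * (m * m)) := by
  push_cast
  rw [abs_mul, abs_prod, abs_prod, pow_add]
  have h1 : ∏ i, |(e i : ℝ)| ≤ B ^ m := by
    calc _ ≤ ∏ i : Fin m, B := prod_le_prod (fun _ _ => abs_nonneg _)
          fun i _ => by linarith [h i, abs_nonneg (d i : ℝ)]
      _ = _ := by simp
  have h2 : ∏ i, |∏ j ∈ Finset.univ.filter (fun j => j ≠ i), ((e i * d j - e j * d i : ℝ))| ≤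
      B ^ (2 * (m * m)) := by
    calc _ ≤ ∏ i : Fin m, (B ^ 2) ^ m := by
          refine prod_le_prod (fun _ _ => abs_nonneg _) fun i _ => ?_
          rw [abs_prod]
          calc _ ≤ ∏ j ∈ Finset.univ.filter (fun j => j ≠ i), B ^ 2 := by
                refine prod_le_prod (fun _ _ => abs_nonneg _) fun j _ => ?_
                refine (abs_sub _ _).trans ?_
                rw [abs_mul, abs_mul]
                have a1 := abs_nonneg (e i : ℝ)
                have a2 := abs_nonneg (e j : ℝ)
                have a3 := abs_nonneg (d i : ℝ)
                have a4 := abs_nonneg (d j : ℝ)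
                calc _ ≤ (|(e i : ℝ)| + |(d i : ℝ)|) * (|(e j : ℝ)| + |(d j : ℝ)|) := by
                      nlinarith [mul_nonneg a1 a2, mul_nonneg a3 a4]
                  _ ≤ B * B := mul_le_mul (h i) (h j) (by positivity) (by linarith)
                  _ = B ^ 2 := by ring
            _ ≤ _ := by
                rw [prod_const]
                refine pow_le_pow_right₀ (by nlinarith) ?_
                exact (card_le_univ _).trans (by simp)
      _ = _ := by
          simp only [prod_const, card_univ, Fintype.card_fin]
          rw [← pow_mul, ← pow_mul]
  exact mul_le_mul h1 h2 (prod_nonneg fun _ _ => abs_nonneg _) (by positivity)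

lemma prod_cover (s s₁ s₂ : Finset ℕ) (g : ℕ → ℝ) (hg : ∀ n, 1 ≤ g n) (hs : s ⊆ s₁ ∪ s₂) :
    ∏ n ∈ s, g n ≤ (∏ n ∈ s₁, g n) * ∏ n ∈ s₂, g n := by
  rw [← prod_union_inter]
  have one : ∀ t : Finset ℕ, 1 ≤ ∏ n ∈ t, g n := fun t => by
    simpa using prod_le_prod (s := t) (fun _ _ => zero_le_one) (fun n _ => hg n)
  calc _ ≤ ∏ n ∈ s₁ ∪ s₂, g n := by
        rw [← prod_sdiff hs]
        exact le_mul_of_one_le_left (by linarith [one s]) (one _)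
    _ ≤ _ := le_mul_of_one_le_right (by linarith [one (s₁ ∪ s₂)]) (one _)

/-- Lower bound for the Euler product over good primes. -/
lemma good_primes (m z N : ℕ) (hN : 16 ≤ N) (D : ℕ) (hD : D ≠ 0) (C : ℝ)
    (hC : Real.log D ≤ C * Real.log N) :
    Real.log (z + 1) ≤ (40 * 2 ^ (2 * m + 1) * Real.exp (2 * C)) * Real.log (Real.log N) *
      ∏ p ∈ ((range (z + 1)).filter Nat.Prime).filter (fun p => 2 * m < p ∧ ¬ p ∣ D),
        (1 + 1 / (p : ℝ)) := by
  have hlogN : (2.719 : ℝ) ≤ Real.log N := by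
    have : Real.log (16 : ℝ) ≤ Real.log N := Real.log_le_log (by norm_num) (by exact_mod_cast hN)
    have h2 : Real.log (16 : ℝ) = 4 * Real.log 2 := by
      rw [show (16 : ℝ) = 2 ^ 4 by norm_num, Real.log_pow]; norm_num
    have := Real.log_two_gt_d9
    linarith
  have hLL : 1 ≤ Real.log (Real.log N) := by
    rw [Real.le_log_iff_exp_le (by linarith)]
    have := Real.exp_one_lt_d9
    linarith
  set w := ⌊Real.log N⌋₊ with hw
  have hw2 : 2 ≤ w := Nat.le_floor (by push_cast; linarith)
  have hwle : (w : ℝ) ≤ Real.log N := Nat.floor_le (by linarith)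
  have hwlt : Real.log N < w + 1 := Nat.lt_floor_add_one _
  set P₀ := (range (z + 1)).filter Nat.Prime with hP₀
  set g : ℕ → ℝ := fun p => 1 + 1 / (p : ℝ) with hg
  have hg1 : ∀ n, 1 ≤ g n := fun n => by
    have : (0 : ℝ) ≤ 1 / n := by positivity
    simp only [hg]; linarith
  set P := P₀.filter (fun p => 2 * m < p ∧ ¬ p ∣ D) with hPdef
  set A := range (2 * m + 1)
  set W := P₀.filter (fun p => p ≤ w)
  set E := D.primeFactors.filter (fun p => w < p)
  have cov : P₀ ⊆ P ∪ (A ∪ (W ∪ E)) := by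
    intro p hp
    have hpp : p.Prime := (mem_filter.1 hp).2
    simp only [P, A, W, E, mem_union, mem_filter, hp, true_and, mem_range, Nat.mem_primeFactors]
    by_cases h1 : p ∣ D
    · by_cases h2 : p ≤ w
      · tauto
      · right; right; right; exact ⟨⟨hpp, h1, hD⟩, by omega⟩
    · by_cases h2 : 2 * m < p
      · tauto
      · right; left; omega
  have b0 := mertens_lower z
  have b1 := prod_cover P₀ P (A ∪ (W ∪ E)) g hg1 cov
  have b2 := prod_cover _ A (W ∪ E) g hg1 subset_rfl
  have b3 := prod_cover _ W E g hg1 subset_rfl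
  have pos : ∀ t : Finset ℕ, 0 ≤ ∏ n ∈ t, g n := fun t => prod_nonneg fun n _ => by linarith [hg1 n]
  have bA : ∏ n ∈ A, g n ≤ 2 ^ (2 * m + 1) := by
    calc _ ≤ ∏ n ∈ A, (2 : ℝ) := by
          refine prod_le_prod (fun n _ => by linarith [hg1 n]) fun n _ => ?_
          simp only [hg]
          rcases Nat.eq_zero_or_pos n with rfl | hn
          · simp
          · have : (1 : ℝ) ≤ n := by exact_mod_cast hn
            have : 1 / (n : ℝ) ≤ 1 := by rw [div_le_one (by linarith)]; exact this
            linarith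
      _ = _ := by simp [A]
  have bW : ∏ n ∈ W, g n ≤ 10 * Real.log (Real.log N) := by
    refine (mertens_upper w hw2 W ?_).trans ?_
    · intro p hp
      simp only [W, P₀, mem_filter] at hp
      exact ⟨hp.1.2, hp.2⟩
    · have : Real.log w ≤ Real.log (Real.log N) :=
        Real.log_le_log (by positivity) hwle
      linarith
  have bE : ∏ n ∈ E, g n ≤ Real.exp (2 * C) := by
    have hcard : (E.card : ℝ) ≤ 2 * C * Real.log N := by
      have h1 : 2 ^ E.card ≤ D := by
        calc 2 ^ E.card = ∏ p ∈ E, 2 := by simp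
          _ ≤ ∏ p ∈ E, p := prod_le_prod' fun p hp =>
              (Nat.prime_of_mem_primeFactors (mem_filter.1 hp).1).two_le
          _ ≤ D := by
              refine Nat.le_of_dvd (Nat.pos_of_ne_zero hD)
                ((prod_dvd_prod_of_subset _ _ _ (filter_subset _ _)).trans
                  (Nat.prod_primeFactors_dvd D))
      have h2 : Real.log ((2 : ℝ) ^ E.card) ≤ Real.log D :=
        Real.log_le_log (by positivity) (by exact_mod_cast h1)
      rw [Real.log_pow] at h2
      have := Real.log_two_gt_d9
      have h3 : (0 : ℝ) ≤ E.card := Nat.cast_nonneg _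
      nlinarith
    calc ∏ n ∈ E, g n ≤ ∏ n ∈ E, Real.exp (1 / Real.log N) := by
          refine prod_le_prod (fun n _ => by linarith [hg1 n]) fun n hn => ?_
          have hwn : w + 1 ≤ n := (mem_filter.1 hn).2
          have : (w : ℝ) + 1 ≤ n := by exact_mod_cast hwn
          have h5 : 1 / (n : ℝ) ≤ 1 / Real.log N := one_div_le_one_div_of_le (by linarith) (by linarith)
          have := Real.add_one_le_exp (1 / Real.log N)
          simp only [hg]; linarith
      _ = Real.exp (E.card * (1 / Real.log N)) := by rw [prod_const, Real.exp_nat_mul]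
      _ ≤ _ := by
          rw [Real.exp_le_exp, mul_one_div, div_le_iff₀ (by linarith)]
          exact hcard
  calc Real.log (z + 1) ≤ 2 * ∏ p ∈ P₀, g p := b0
    _ ≤ 2 * ((∏ n ∈ P, g n) * (2 ^ (2 * m + 1) * (10 * Real.log (Real.log N) * Real.exp (2 * C)))) := by
        refine mul_le_mul_of_nonneg_left (b1.trans ?_) zero_le_two
        refine mul_le_mul_of_nonneg_left (b2.trans ?_) (pos _)
        refine mul_le_mul bA (b3.trans ?_) (pos _) (by positivity)
        exact mul_le_mul bW bE (pos _) (by linarith)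
    _ = (20 * 2 ^ (2 * m + 1) * Real.exp (2 * C)) * Real.log (Real.log N) * ∏ p ∈ P, g p := by ring
    _ ≤ _ := by
        refine mul_le_mul_of_nonneg_right ?_ (pos _)
        refine mul_le_mul_of_nonneg_right ?_ (by linarith)
        refine mul_le_mul_of_nonneg_right ?_ (Real.exp_pos _).le
        refine mul_le_mul_of_nonneg_right (by norm_num) (by positivity)

theorem stmt2
    (m : ℕ) (hm : 1 ≤ m) (c₁ c : ℝ) (hc₁ : 0 < c₁) (hc : 0 < c) (hc' : c < 1) :
    ∃ c₂ : ℝ, 0 < c₂ ∧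
      ∀ N' : ℕ, 16 ≤ N' →
        ∀ e d : Fin m → ℤ,
          (∀ i, |(e i : ℝ)| + |(d i : ℝ)| ≤ c₁ * (N' : ℝ) ^ (100 : ℕ)) →
          (∏ i, e i) *
            ∏ i, ∏ j ∈ Finset.univ.filter (fun j => j ≠ i),
              (e i * d j - e j * d i) ≠ 0 →
          (((Finset.Icc 1 N').filter (fun n : ℕ =>
              Int.gcd (∏ i, (e i * (n : ℤ) + d i)) (primor ((N' : ℝ) ^ c)) = 1)).card : ℝ)
            ≤ c₂ * (N' : ℝ) * (Real.log (Real.log N')) ^ m / (Real.log N') ^ m := by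
  have hm0 : (0 : ℝ) < m := by exact_mod_cast hm
  set k : ℝ := min c (1 / (16 * m)) with hk
  have hk0 : 0 < k := lt_min hc (by positivity)
  set C : ℝ := (m + 2 * (m * m) : ℕ) * (Real.log (max 1 c₁) + 100) with hCdef
  set H : ℝ := 40 * 2 ^ (2 * m + 1) * Real.exp (2 * C) with hH
  have hH0 : 0 < H := by positivity
  refine ⟨8 * (H / k) ^ m, by positivity, ?_⟩
  intro N hN e d hed hΔ
  set Δ := (∏ i, e i) * ∏ i, ∏ j ∈ Finset.univ.filter (fun j => j ≠ i),
              (e i * d j - e j * d i) with hΔdef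
  have hN1 : (1 : ℝ) ≤ N := by exact_mod_cast (by omega : 1 ≤ N)
  have hN0 : (0 : ℝ) < N := by linarith
  have hlogN : 1 ≤ Real.log N := by
    rw [Real.le_log_iff_exp_le hN0]
    have := Real.exp_one_lt_d9
    have : (16 : ℝ) ≤ N := by exact_mod_cast hN
    linarith
  set D := Δ.natAbs with hD
  have hD0 : D ≠ 0 := Int.natAbs_ne_zero.2 hΔ
  have hDC : Real.log D ≤ C * Real.log N := by
    have hM1 : 1 ≤ max 1 c₁ := le_max_left _ _
    have hB1 : 1 ≤ max 1 c₁ * (N : ℝ) ^ 100 := one_le_mul_of_one_le_of_one_le hM1 (one_le_pow₀ hN1)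
    have h1 := disc_bound m e d (max 1 c₁ * (N : ℝ) ^ 100) hB1
      (fun i => (hed i).trans (mul_le_mul_of_nonneg_right (le_max_right _ _) (by positivity)))
    rw [← hΔdef] at h1
    have h2 : (D : ℝ) = |(Δ : ℝ)| := by rw [hD, Nat.cast_natAbs, Int.cast_abs]
    rw [← h2] at h1
    have h3 := Real.log_le_log (by exact_mod_cast Nat.pos_of_ne_zero hD0) h1
    rw [Real.log_pow, Real.log_mul (by positivity) (by positivity), Real.log_pow] at h3
    refine h3.trans ?_
    rw [hCdef, mul_assoc]
    refine mul_le_mul_of_nonneg_left ?_ (Nat.cast_nonneg _)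
    have := Real.log_nonneg hM1
    push_cast
    nlinarith
  set z := ⌊(N : ℝ) ^ k⌋₊ with hz
  have hgood := good_primes m z N hN D hD0 C hDC
  set P := ((range (z + 1)).filter Nat.Prime).filter (fun p => 2 * m < p ∧ ¬ p ∣ D) with hPdef
  have hNk1 : 1 ≤ (N : ℝ) ^ k := Real.one_le_rpow hN1 hk0.le
  have hz1 : 1 ≤ z := Nat.le_floor (by exact_mod_cast hNk1)
  have hzle : (z : ℝ) ≤ (N : ℝ) ^ k := Nat.floor_le (by linarith)
  have hlogz : Real.log z ≤ k * Real.log N := by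
    rw [← Real.log_rpow hN0]
    exact Real.log_le_log (by exact_mod_cast hz1) hzle
  have hlogz1 : k * Real.log N ≤ Real.log (z + 1) := by
    rw [← Real.log_rpow hN0]
    exact Real.log_le_log (by linarith) (Nat.lt_floor_add_one _).le
  have hPp : ∀ p ∈ P, p.Prime := fun p hp => (mem_filter.1 (mem_filter.1 hp).1).2
  have hPz : ∀ p ∈ P, p ≤ z := fun p hp => by
    have := mem_range.1 (mem_filter.1 (mem_filter.1 hp).1).1
    omega
  have hPm : ∀ p ∈ P, 2 * m < p := fun p hp => (mem_filter.1 hp).2.1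
  have hPm' : ∀ p ∈ P, 2 * (m : ℝ) < p := fun p hp => by exact_mod_cast hPm p hp
  have hPD : ∀ p ∈ P, ¬ (p : ℤ) ∣ Δ := fun p hp h => (mem_filter.1 hp).2.2 (by
    rw [hD]; exact Int.natCast_dvd.1 h)
  let h : ℕ → ℝ := fun p => m / (p - m)
  have hh : ∀ p ∈ P, 0 < h p := fun p hp => div_pos hm0 (by linarith [hPm' p hp])
  let f : ℕ → ℕ → ℝ := fun p n =>
    if (p : ℤ) ∣ ∏ i, (e i * (n : ℤ) + d i) then -((p - m) / m) else 1
  have hcount : ∀ p ∈ P, ∀ a b : ℝ, ∑ n ∈ range p,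
      (if (p : ℤ) ∣ ∏ i, (e i * (n : ℤ) + d i) then a else b) = m * a + (p - m) * b := by
    intro p hp a b
    have hc1 := root_count m e d p (hPp p hp) (hPD p hp)
    have hc2 := card_filter_add_card_filter_not (s := range p)
      (fun n : ℕ => (p : ℤ) ∣ ∏ i, (e i * (n : ℤ) + d i))
    rw [hc1, card_range] at hc2
    rw [sum_ite, sum_const, sum_const, nsmul_eq_mul, nsmul_eq_mul, hc1]
    have : (((range p).filter (fun n : ℕ => ¬ (p : ℤ) ∣ ∏ i, (e i * (n : ℤ) + d i))).card : ℝ)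
        = p - m := by
      rw [eq_sub_iff_add_eq, add_comm]; exact_mod_cast hc2
    rw [this]
  have hQ1 : 1 ≤ (N : ℝ) ^ (1 / 4 : ℝ) := Real.one_le_rpow hN1 (by norm_num)
  set Q := (N : ℝ) ^ (1 / 4 : ℝ) with hQ
  have hQ4 : Q ^ 4 = N := by
    rw [hQ, ← Real.rpow_natCast, ← Real.rpow_mul hN0.le]; norm_num
  have hlogQ : Real.log Q = 1 / 4 * Real.log N := Real.log_rpow hN0 _
  set F := P.powerset.filter fun T => ∑ p ∈ T, Real.log (p : ℕ) ≤ 1 / 4 * Real.log N with hF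
  set X := (Finset.Icc 1 N).filter (fun n : ℕ =>
              Int.gcd (∏ i, (e i * (n : ℤ) + d i)) (primor ((N : ℝ) ^ c)) = 1) with hX
  have hsieve := sieve P hPp f h
    (by
      intro p hp n
      have : ((p : ℤ) ∣ ∏ i, (e i * ((n + p : ℕ) : ℤ) + d i)) ↔
          ((p : ℤ) ∣ ∏ i, (e i * (n : ℤ) + d i)) := by
        rw [← ZMod.intCast_zmod_eq_zero_iff_dvd, ← ZMod.intCast_zmod_eq_zero_iff_dvd]
        push_cast
        simp
      simp only [f, this])
    hh
    (by
      intro p hp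
      simp only [f]
      rw [hcount p hp]
      field_simp
      ring)
    (by
      intro p hp
      simp only [f, h, ite_pow]
      rw [hcount p hp]
      have : (p : ℝ) - m ≠ 0 := by linarith [hPm' p hp]
      field_simp
      ring)
    (by
      intro p hp n
      have h1 : (0 : ℝ) < p - m := by linarith [hPm' p hp]
      simp only [f, h]
      split_ifs
      · rw [mul_neg, abs_neg, div_mul_div_cancel₀ h1.ne', div_self hm0.ne', abs_one]
      · rw [mul_one, abs_of_pos (div_pos hm0 h1), div_le_one h1]
        linarith [hPm' p hp])
    (N + 1) X
    (by
      intro n hn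
      have := mem_Icc.1 (mem_filter.1 hn).1
      rw [mem_range]; omega)
    (by
      intro n hn p hp
      have hn2 := (mem_filter.1 hn).2
      simp only [f]
      rw [if_neg]
      intro hdiv
      have hpr : (p : ℤ) ∣ (primor ((N : ℝ) ^ c) : ℤ) := by
        rw [Int.natCast_dvd_natCast]
        refine dvd_prod_of_mem (fun p : ℕ => p) ?_
        rw [mem_filter, mem_range]
        refine ⟨?_, hPp p hp⟩
        have : z ≤ ⌊(N : ℝ) ^ c⌋₊ := Nat.floor_mono
          (Real.rpow_le_rpow_of_exponent_le hN1 (min_le_left _ _))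
        have := hPz p hp
        omega
      have h1 := Int.dvd_coe_gcd hdiv hpr
      rw [hn2] at h1
      have h2 : p ∣ 1 := by exact_mod_cast h1
      exact (hPp p hp).one_lt.ne' (Nat.dvd_one.1 h2))
    Q hQ1 F (filter_subset _ _)
    (by
      rw [hF, mem_filter]
      refine ⟨empty_mem_powerset _, ?_⟩
      simp only [sum_empty]; linarith)
    (by
      intro T hT
      rw [hF, mem_filter, mem_powerset] at hT
      have hpr : ∀ p ∈ T, p.Prime := fun p hp => hPp p (hT.1 hp)
      have h3 := hT.2
      rw [← log_prod_nat T hpr, ← hlogQ] at h3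
      rwa [Real.log_le_log_iff] at h3
      · exact_mod_cast prod_pos fun p hp => (hpr p hp).pos
      · linarith)
  set S := ∑ T ∈ F, ∏ p ∈ T, h p with hS
  have hmark : ∏ p ∈ P, (1 + h p) ≤ 2 * S := by
    refine markov P h (fun p => Real.log p) (fun p hp => (hh p hp).le)
      (fun p _ => Real.log_natCast_nonneg p) _ (by linarith) ?_
    have h1 := mertens1 z P (fun p hp => ⟨hPp p hp, hPz p hp⟩)
    have h2 : ∑ p ∈ P, h p / (1 + h p) * Real.log p = m * ∑ p ∈ P, Real.log p / p := by
      rw [mul_sum]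
      refine sum_congr rfl fun p hp => ?_
      have h3 : (p : ℝ) - m ≠ 0 := by linarith [hPm' p hp]
      have h4 : (p : ℝ) ≠ 0 := by linarith [hPm' p hp]
      have h5 : 1 + h p = p / (p - m) := by simp only [h]; field_simp; ring
      rw [h5]
      simp only [h]
      field_simp
    rw [h2]
    have h6 : k ≤ 1 / (16 * m) := min_le_right _ _
    have h7 : k * Real.log N ≤ 1 / (16 * m) * Real.log N :=
      mul_le_mul_of_nonneg_right h6 (by linarith)
    calc (m : ℝ) * ∑ p ∈ P, Real.log p / p ≤ m * (2 * (1 / (16 * m) * Real.log N)) := by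
          refine mul_le_mul_of_nonneg_left ?_ hm0.le
          linarith
      _ = 1 / 4 * Real.log N / 2 := by field_simp; norm_num
  set V := ∏ p ∈ P, (1 + 1 / (p : ℝ)) with hV
  have hV0 : 0 ≤ V := prod_nonneg fun p _ => by positivity
  have hVS : V ^ m ≤ 2 * S := by
    refine le_trans ?_ hmark
    rw [hV, ← prod_pow]
    refine prod_le_prod (fun p _ => by positivity) fun p hp => ?_
    have h3 : (0 : ℝ) < p - m := by linarith [hPm' p hp]
    have h4 : (0 : ℝ) < p := by linarith [hPm' p hp]
    have h5 : 1 + h p = (1 - (m : ℝ) / p)⁻¹ := by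
      simp only [h]
      have : (1 : ℝ) - m / p = (p - m) / p := by field_simp
      rw [this, inv_div]; field_simp; ring
    rw [h5]
    calc (1 + 1 / (p : ℝ)) ^ m ≤ (Real.exp (1 / p)) ^ m := by
          refine pow_le_pow_left₀ (by positivity) ?_ m
          linarith [Real.add_one_le_exp (1 / (p : ℝ))]
      _ = (Real.exp (-(m / p)))⁻¹ := by
          rw [← Real.exp_nat_mul, ← Real.exp_neg]; congr 1; ring
      _ ≤ _ := by
          have h6 : 0 < 1 - (m : ℝ) / p := by
            rw [sub_pos, div_lt_one h4]; linarith
          refine inv_anti₀ h6 ?_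
          linarith [Real.add_one_le_exp (-(m / p : ℝ))]
  set LL := Real.log (Real.log N) with hLLdef
  have hLL : 0 ≤ LL := Real.log_nonneg hlogN
  have hX4 : (X.card : ℝ) * S ≤ 4 * N := by
    refine hsieve.trans ?_
    rw [hQ4]
    have : Q ≤ Q ^ 4 := le_self_pow₀ hQ1 (by norm_num)
    rw [hQ4] at this
    push_cast; linarith
  have hlow : (k * Real.log N) ^ m ≤ (H * LL) ^ m * (2 * S) := by
    calc (k * Real.log N) ^ m ≤ (H * LL * V) ^ m :=
          pow_le_pow_left₀ (by positivity) (hlogz1.trans hgood) m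
      _ = (H * LL) ^ m * V ^ m := by rw [mul_pow]
      _ ≤ _ := mul_le_mul_of_nonneg_left hVS (by positivity)
  rw [le_div_iff₀ (by positivity)]
  have hfin : (X.card : ℝ) * (k * Real.log N) ^ m ≤ (H * LL) ^ m * (8 * N) := by
    calc (X.card : ℝ) * (k * Real.log N) ^ m ≤ X.card * ((H * LL) ^ m * (2 * S)) :=
          mul_le_mul_of_nonneg_left hlow (Nat.cast_nonneg _)
      _ = (H * LL) ^ m * (2 * (X.card * S)) := by ring
      _ ≤ (H * LL) ^ m * (2 * (4 * N)) := by gcongr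
      _ = _ := by ring
  have hkm : 0 < k ^ m := by positivity
  refine le_of_mul_le_mul_right ?_ hkm
  calc (X.card : ℝ) * Real.log N ^ m * k ^ m = X.card * (k * Real.log N) ^ m := by
        rw [mul_pow]; ring
    _ ≤ _ := hfin
    _ = _ := by rw [div_pow, mul_pow]; field_simp
end
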